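/- arXiv:2409.18309 — 2 statements merged into one kernel-verified Lean document; each statement's English description precedes it below -/
import Mathlib

section
/- Let d ∈ ℕ, 0 < α < d, and let p, q, r satisfy 1 < p < d/α, 1 < q < d/α, and 1/p + 1/q = 1/r + α/d. Then there exists a constant C = C(α, d, p, q) > 0, independent of θ, such that for every θ ∈ [0,1] and all nonnegative measurable functions f ∈ L^p(ℝ^d) and g ∈ L^q(ℝ^d), one has ‖I_α^θ(f,g)‖_{L^r(ℝ^d)} ≤ C ‖f‖_{L^p(ℝ^d)} ‖g‖_{L^q(ℝ^d)}. -/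
open MeasureTheory ENNReal

/-- The bilinear fractional integral operator
`I_α^θ(f,g)(x) = ∫_{ℝ^d} f(x + (θ−1)y) g(x + θy) |y|^{α−d} dy`,
taken in the extended-real sense. -/
noncomputable def Iop (d : ℕ) (α θ : ℝ)
    (f g : EuclideanSpace ℝ (Fin d) → ℝ≥0∞) (x : EuclideanSpace ℝ (Fin d)) : ℝ≥0∞ :=
  ∫⁻ y : EuclideanSpace ℝ (Fin d),
    f (x + (θ - 1) • y) * g (x + θ • y) * ENNReal.ofReal (‖y‖ ^ (α - (d : ℝ)))

/-- The `L^p` quasi-norm `(∫ |h|^p)^{1/p}` for a nonnegative (extended-real valued)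
function `h` on `ℝ^d`. -/
noncomputable def LpNorm (d : ℕ) (p : ℝ)
    (h : EuclideanSpace ℝ (Fin d) → ℝ≥0∞) : ℝ≥0∞ :=
  (∫⁻ x : EuclideanSpace ℝ (Fin d), h x ^ p) ^ (1 / p)


lemma wsum_fin (c : ℝ) (hc : 0 < c) : (∑' k : ℤ, (2:ℝ≥0∞) ^ (-c * |(k:ℝ)|)) ≠ ∞ := by
  have h1 : Summable (fun k : ℤ => (2:ℝ) ^ (-c * |(k:ℝ)|)) := by
    have h0 : Summable (fun n : ℕ => (2:ℝ) ^ (-c * (n:ℝ))) := by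
      have : (fun n : ℕ => (2:ℝ) ^ (-c * (n:ℝ))) = fun n : ℕ => ((2:ℝ) ^ (-c)) ^ n := by
        ext n
        rw [Real.rpow_mul (by norm_num), Real.rpow_natCast]
      rw [this]
      apply summable_geometric_of_lt_one (by positivity)
      exact Real.rpow_lt_one_of_one_lt_of_neg (by norm_num) (by linarith)
    apply Summable.of_nat_of_neg
    · simpa using h0
    · simpa using h0
  have h2 : ∀ k : ℤ, (2:ℝ≥0∞) ^ (-c * |(k:ℝ)|) = ENNReal.ofReal ((2:ℝ) ^ (-c * |(k:ℝ)|)) := by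
    intro k
    rw [← ENNReal.ofReal_rpow_of_pos (by norm_num)]; simp
  simp_rw [h2]
  exact h1.tsum_ofReal_ne_top

lemma two_add (x y : ℝ) : (2:ℝ≥0∞) ^ (x + y) = 2 ^ x * 2 ^ y :=
  ENNReal.rpow_add _ _ (by norm_num) (by norm_num)

lemma tw_ne_zero (x : ℝ) : (2:ℝ≥0∞) ^ x ≠ 0 := by
  simp [ENNReal.rpow_eq_zero_iff]

lemma tw_ne_top (x : ℝ) : (2:ℝ≥0∞) ^ x ≠ ∞ := by
  simp [ENNReal.rpow_eq_top_iff]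

lemma two_mono {x y : ℝ} (h : x ≤ y) : (2:ℝ≥0∞) ^ x ≤ 2 ^ y :=
  ENNReal.rpow_le_rpow_of_exponent_le (by norm_num) h

lemma geom (a b : ℝ) (ha : 0 < a) (hb : 0 < b) : ∃ K : ℝ≥0∞, K ≠ ∞ ∧ K ≠ 0 ∧ ∀ A B : ℝ≥0∞,
    ∑' k : ℤ, min (A * 2 ^ (a * (k:ℝ))) (B * 2 ^ (-b * (k:ℝ))) ≤
      K * (A ^ (b / (a + b)) * B ^ (a / (a + b))) := by
  set c := min a b with hc
  have hc0 : 0 < c := lt_min ha hb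
  have hA' : 0 < b / (a+b) := by positivity
  have hB' : 0 < a / (a+b) := by positivity
  refine ⟨2 ^ c * ∑' k : ℤ, (2:ℝ≥0∞) ^ (-c * |(k:ℝ)|),
    ENNReal.mul_ne_top (tw_ne_top _) (wsum_fin c hc0), ?_, ?_⟩
  · refine mul_ne_zero (tw_ne_zero _) ?_
    intro h
    rw [ENNReal.tsum_eq_zero] at h
    exact tw_ne_zero _ (h 0)
  intro A B
  by_cases hA : A = 0
  · simp [hA]
  by_cases hB : B = 0
  · simp [hB]
  have hK : 2 ^ c * ∑' k : ℤ, (2:ℝ≥0∞) ^ (-c * |(k:ℝ)|) ≠ 0 := by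
    refine mul_ne_zero (tw_ne_zero _) ?_
    intro h
    rw [ENNReal.tsum_eq_zero] at h
    exact tw_ne_zero _ (h 0)
  by_cases hAt : A = ∞
  · rw [hAt, ENNReal.top_rpow_of_pos hA', ENNReal.top_mul, ENNReal.mul_top hK]
    · exact le_top
    · simp only [ne_eq, ENNReal.rpow_eq_zero_iff, not_or, not_and]
      exact ⟨fun h => absurd h hB, fun _ => by linarith⟩
  by_cases hBt : B = ∞
  · rw [hBt, ENNReal.top_rpow_of_pos hB', ENNReal.mul_top, ENNReal.mul_top hK]
    · exact le_top
    · simp only [ne_eq, ENNReal.rpow_eq_zero_iff, not_or, not_and]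
      exact ⟨fun h => absurd h hA, fun _ => by linarith⟩
  -- finite positive case
  have key : ∀ A : ℝ≥0∞, A ≠ 0 → A ≠ ∞ → ∃ x : ℝ, A = 2 ^ x := by
    intro A h0 ht
    refine ⟨Real.logb 2 A.toReal, ?_⟩
    have hp : 0 < A.toReal := ENNReal.toReal_pos h0 ht
    have : (2:ℝ) ^ (Real.logb 2 A.toReal) = A.toReal :=
      Real.rpow_logb (by norm_num) (by norm_num) hp
    calc A = ENNReal.ofReal A.toReal := (ENNReal.ofReal_toReal ht).symm
      _ = ENNReal.ofReal ((2:ℝ) ^ (Real.logb 2 A.toReal)) := by rw [this]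
      _ = _ := by rw [← ENNReal.ofReal_rpow_of_pos (by norm_num)]; simp
  obtain ⟨x, rfl⟩ := key A hA hAt
  obtain ⟨y, rfl⟩ := key B hB hBt
  set τ := (y - x) / (a + b) with hτ
  have hP : ((2:ℝ≥0∞) ^ x) ^ (b / (a + b)) * ((2:ℝ≥0∞) ^ y) ^ (a / (a + b)) = 2 ^ (x + a * τ) := by
    rw [← ENNReal.rpow_mul, ← ENNReal.rpow_mul, ← two_add]
    congr 1
    rw [hτ]; field_simp; ring
  rw [hP]
  have hxy : x + a * τ = y - b * τ := by
    rw [hτ]; field_simp; ring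
  have hterm : ∀ k : ℤ, min ((2:ℝ≥0∞) ^ x * 2 ^ (a * (k:ℝ))) (2 ^ y * 2 ^ (-b * (k:ℝ))) ≤
      2 ^ (x + a * τ) * 2 ^ c * 2 ^ (-c * |((k - ⌊τ⌋ : ℤ):ℝ)|) := by
    intro k
    rw [← two_add, ← two_add, ← two_add, ← two_add]
    have hf1 : (⌊τ⌋ : ℝ) ≤ τ := Int.floor_le τ
    have hf2 : τ < ⌊τ⌋ + 1 := Int.lt_floor_add_one τ
    have hca : c ≤ a := min_le_left _ _
    have hcb : c ≤ b := min_le_right _ _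
    by_cases hk : k ≤ ⌊τ⌋
    · have hk' : (k:ℝ) ≤ ⌊τ⌋ := by exact_mod_cast hk
      refine (min_le_left _ _).trans (two_mono ?_)
      push_cast
      rw [abs_of_nonpos (by linarith)]
      nlinarith
    · have hk' : (⌊τ⌋:ℝ) + 1 ≤ k := by exact_mod_cast (not_le.mp hk)
      refine (min_le_right _ _).trans (two_mono ?_)
      push_cast
      rw [abs_of_nonneg (by linarith), hxy]
      nlinarith
  calc _ ≤ ∑' k : ℤ, (2:ℝ≥0∞) ^ (x + a * τ) * 2 ^ c * 2 ^ (-c * |((k - ⌊τ⌋ : ℤ):ℝ)|) :=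
        ENNReal.tsum_le_tsum hterm
    _ = (2:ℝ≥0∞) ^ (x + a * τ) * 2 ^ c * ∑' k : ℤ, 2 ^ (-c * |((k - ⌊τ⌋ : ℤ):ℝ)|) :=
        ENNReal.tsum_mul_left
    _ = (2:ℝ≥0∞) ^ (x + a * τ) * 2 ^ c * ∑' k : ℤ, 2 ^ (-c * |(k:ℝ)|) := by
        congr 1
        exact (Equiv.subRight ⌊τ⌋).tsum_eq (fun k : ℤ => (2:ℝ≥0∞) ^ (-c * |(k:ℝ)|))
    _ ≤ _ := by
        apply le_of_eq; ring

/-- weighted Jensen -/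
lemma jens {X : Type*} [MeasurableSpace X] (μ : Measure X) (s : ℝ) (hs : 1 ≤ s) (w h : X → ℝ≥0∞)
    (hw : AEMeasurable w μ) (hh : AEMeasurable h μ) :
    (∫⁻ x, w x * h x ∂μ) ^ s ≤ (∫⁻ x, w x ∂μ) ^ (s - 1) * ∫⁻ x, w x * h x ^ s ∂μ := by
  rcases hs.eq_or_lt with rfl | hs
  · simp
  have hs0 : 0 < s := by linarith
  have hconj : (s / (s-1)).HolderConjugate s := by
    have := (Real.HolderConjugate.conjExponent hs).symm
    simpa [Real.conjExponent] using this
  have h1 := ENNReal.lintegral_mul_le_Lp_mul_Lq μ hconj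
    (f := fun x => w x ^ ((s-1)/s)) (g := fun x => w x ^ (1/s) * h x)
    (hw.pow_const _) ((hw.pow_const _).mul hh)
  have e1 : ∀ x, ((fun x => w x ^ ((s-1)/s)) * (fun x => w x ^ (1/s) * h x)) x = w x * h x := by
    intro x
    simp only [Pi.mul_apply]
    rw [← mul_assoc, ← ENNReal.rpow_add_of_nonneg _ _ (div_nonneg (by linarith) hs0.le) (by positivity)]
    have : (s-1)/s + 1/s = 1 := by field_simp; ring
    rw [this, ENNReal.rpow_one]
  have e2 : ∀ x, (w x ^ ((s-1)/s)) ^ (s/(s-1)) = w x := by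
    intro x
    rw [← ENNReal.rpow_mul]
    have : (s-1)/s * (s/(s-1)) = 1 := by
      have : s - 1 ≠ 0 := by linarith
      field_simp
    rw [this, ENNReal.rpow_one]
  have e3 : ∀ x, (w x ^ (1/s) * h x) ^ s = w x * h x ^ s := by
    intro x
    rw [ENNReal.mul_rpow_of_nonneg _ _ hs0.le, ← ENNReal.rpow_mul]
    have : 1/s * s = 1 := by field_simp
    rw [this, ENNReal.rpow_one]
  simp only [e1, e2, e3] at h1
  calc _ ≤ _ := ENNReal.rpow_le_rpow h1 hs0.le
    _ = _ := by
      rw [ENNReal.mul_rpow_of_nonneg _ _ hs0.le, ← ENNReal.rpow_mul, ← ENNReal.rpow_mul]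
      have h1 : 1/s * s = 1 := by field_simp
      have h2 : 1 / (s/(s-1)) * s = s - 1 := by field_simp
      rw [h1, h2, ENNReal.rpow_one]


abbrev EE (d : ℕ) := EuclideanSpace ℝ (Fin d)

noncomputable def av (d : ℕ) (k : ℤ) (f : EE d → ℝ≥0∞) (x : EE d) : ℝ≥0∞ :=
  2 ^ (-(d:ℝ) * (k:ℝ)) * ∫⁻ y in Metric.closedBall x (2 * 2 ^ (k:ℝ)), f y

noncomputable def Mx (d : ℕ) (f : EE d → ℝ≥0∞) (x : EE d) : ℝ≥0∞ := ⨆ k : ℤ, av d k f x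

lemma vol_ball (d : ℕ) (x : EE d) (c : ℝ) (hc : 0 ≤ c) (k : ℤ) :
    volume (Metric.closedBall x (c * 2 ^ (k:ℝ))) =
      ENNReal.ofReal (c ^ d) * 2 ^ ((d:ℝ) * (k:ℝ)) * volume (Metric.ball (0 : EE d) 1) := by
  rw [Measure.addHaar_closedBall _ _ (by positivity), finrank_euclideanSpace_fin, mul_pow,
    ENNReal.ofReal_mul (by positivity)]
  congr 2
  rw [← Real.rpow_natCast, ← Real.rpow_mul (by norm_num), ← ENNReal.ofReal_rpow_of_pos (by norm_num),
    mul_comm (k:ℝ)]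
  simp

lemma volV_ne_top (d : ℕ) : volume (Metric.ball (0 : EE d) 1) ≠ ∞ := measure_ball_lt_top.ne

lemma volV_ne_zero (d : ℕ) : volume (Metric.ball (0 : EE d) 1) ≠ 0 :=
  (Metric.measure_ball_pos _ _ one_pos).ne'

lemma meas_ballint (d : ℕ) (R : ℝ) (f : EE d → ℝ≥0∞) (hf : Measurable f) :
    Measurable (fun x : EE d => ∫⁻ y in Metric.closedBall x R, f y) := by
  have h : ∀ x : EE d, ∫⁻ y in Metric.closedBall x R, f y =
      ∫⁻ y, Set.indicator {z : EE d × EE d | dist z.2 z.1 ≤ R} (fun z => f z.2) (x, y) := by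
    intro x
    rw [← lintegral_indicator Metric.isClosed_closedBall.measurableSet]
    rfl
  simp_rw [h]
  apply Measurable.lintegral_prod_right'
    (f := Set.indicator {z : EE d × EE d | dist z.2 z.1 ≤ R} (fun z => f z.2))
  apply Measurable.indicator (hf.comp measurable_snd)
  exact measurableSet_le (by fun_prop) (by fun_prop)

lemma av_meas (d : ℕ) (k : ℤ) (f : EE d → ℝ≥0∞) (hf : Measurable f) : Measurable (av d k f) :=
  (meas_ballint d _ f hf).const_mul _

lemma Mx_meas (d : ℕ) (f : EE d → ℝ≥0∞) (hf : Measurable f) : Measurable (Mx d f) :=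
  Measurable.iSup fun k => av_meas d k f hf

lemma two_cancel (x : ℝ) : (2:ℝ≥0∞) ^ (-x) * 2 ^ x = 1 := by
  rw [← two_add]; simp

/-- weak type (1,1) -/
lemma weak (d : ℕ) (hd : 0 < d) : ∃ C : ℝ≥0∞, C ≠ ∞ ∧ ∀ (f : EE d → ℝ≥0∞), Measurable f → ∀ l : ℝ≥0∞,
    l ≠ 0 → l ≠ ∞ → volume {x | l < Mx d f x} ≤ C * l⁻¹ * ∫⁻ x, f x := by
  set V := volume (Metric.ball (0 : EE d) 1) with hV
  refine ⟨1 + ENNReal.ofReal ((10:ℝ)^d) * V,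
    by finiteness [volV_ne_top d], ?_⟩
  intro f hf l hl0 hlt
  by_cases hI : ∫⁻ x, f x = ∞
  · rw [hI, ENNReal.mul_top]
    · exact le_top
    · refine mul_ne_zero (by simp) (by simpa using hlt)
  have hk : ∀ x : EE d, ∃ k : ℤ, x ∈ {x | l < Mx d f x} → l < av d k f x := by
    intro x
    by_cases hx : l < Mx d f x
    · obtain ⟨k, hk⟩ := lt_iSup_iff.mp hx
      exact ⟨k, fun _ => hk⟩
    · exact ⟨0, fun h => absurd h hx⟩
  choose k hk using hk
  have hk2 : ∀ x ∈ {x | l < Mx d f x},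
      2 ^ ((d:ℝ) * (k x:ℝ)) ≤ l⁻¹ * ∫⁻ y in Metric.closedBall x (2 * 2 ^ (k x:ℝ)), f y := by
    intro x hx
    have h := (hk x hx).le
    rw [av] at h
    rw [mul_comm l⁻¹, ← div_eq_mul_inv, ENNReal.le_div_iff_mul_le (Or.inl hl0) (Or.inl hlt)]
    calc _ ≤ 2 ^ ((d:ℝ) * (k x:ℝ)) * (2 ^ (-(d:ℝ) * (k x:ℝ)) * ∫⁻ y in Metric.closedBall x (2 * 2 ^ (k x:ℝ)), f y) := by gcongr
      _ = _ := by
        rw [← mul_assoc, ← two_add]; ring_nf; simp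
  -- bounded radii
  obtain ⟨R, hR⟩ : ∃ R : ℝ, ∀ x ∈ {x | l < Mx d f x}, 2 * (2:ℝ) ^ (k x:ℝ) ≤ R := by
    have hfin : l⁻¹ * ∫⁻ y, f y ≠ ∞ := ENNReal.mul_ne_top (by simpa using hl0) hI
    refine ⟨2 * max 1 (l⁻¹ * ∫⁻ y, f y).toReal, fun x hx => ?_⟩
    have h1 : 2 ^ ((d:ℝ) * (k x:ℝ)) ≤ l⁻¹ * ∫⁻ y, f y :=
      (hk2 x hx).trans (by gcongr; exact Measure.restrict_le_self)
    have h2 := ENNReal.toReal_mono hfin h1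
    rw [← ENNReal.toReal_rpow] at h2
    simp only [ENNReal.toReal_ofNat] at h2
    gcongr
    rcases le_total (k x : ℝ) 0 with h0 | h0
    · exact le_max_of_le_left (Real.rpow_le_one_of_one_le_of_nonpos (by norm_num) h0)
    · refine le_max_of_le_right (le_trans ?_ h2)
      apply Real.rpow_le_rpow_of_exponent_le (by norm_num)
      have : (1:ℝ) ≤ d := by exact_mod_cast hd
      nlinarith
  obtain ⟨u, hut, hdisj, hcov⟩ := Vitali.exists_disjoint_subfamily_covering_enlargement_closedBall
    {x | l < Mx d f x} (fun x => x) (fun x => 2 * (2:ℝ) ^ (k x:ℝ)) R hR 5 (by norm_num)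
  have huc : u.Countable := by
    apply hdisj.countable_of_nonempty_interior
    intro x hx
    refine ⟨x, ?_⟩
    apply Metric.ball_subset_interior_closedBall
    exact Metric.mem_ball_self (by positivity)
  have hsub : {x | l < Mx d f x} ⊆ ⋃ x ∈ u, Metric.closedBall x (10 * (2:ℝ) ^ (k x:ℝ)) := by
    intro x hx
    obtain ⟨b, hb, hbb⟩ := hcov x hx
    simp only [Set.mem_iUnion]
    refine ⟨b, hb, ?_⟩
    have := hbb (Metric.mem_closedBall_self (by positivity))
    rwa [← mul_assoc, show (5:ℝ) * 2 = 10 by norm_num] at this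
  have : Countable u := huc.to_subtype
  calc volume {x | l < Mx d f x} ≤ volume (⋃ x ∈ u, Metric.closedBall x (10 * (2:ℝ) ^ (k x:ℝ))) :=
        measure_mono hsub
    _ ≤ ∑' x : u, volume (Metric.closedBall (x : EE d) (10 * (2:ℝ) ^ (k x:ℝ))) :=
        measure_biUnion_le _ huc _
    _ ≤ ∑' x : u, (ENNReal.ofReal ((10:ℝ)^d) * V * l⁻¹) *
          ∫⁻ y in Metric.closedBall (x : EE d) (2 * 2 ^ (k x:ℝ)), f y := by
        apply ENNReal.tsum_le_tsum
        intro x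
        rw [vol_ball d _ _ (by norm_num)]
        calc _ ≤ ENNReal.ofReal ((10:ℝ)^d) * (l⁻¹ * ∫⁻ y in Metric.closedBall (x : EE d) (2 * 2 ^ (k x:ℝ)), f y) * V := by
              gcongr
              exact hk2 x (hut x.2)
          _ = _ := by ring
    _ = (ENNReal.ofReal ((10:ℝ)^d) * V * l⁻¹) *
          ∑' x : u, ∫⁻ y in Metric.closedBall (x : EE d) (2 * 2 ^ (k x:ℝ)), f y := ENNReal.tsum_mul_left
    _ = (ENNReal.ofReal ((10:ℝ)^d) * V * l⁻¹) *
          ∫⁻ y in ⋃ x ∈ u, Metric.closedBall (x : EE d) (2 * 2 ^ (k x:ℝ)), f y := by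
        congr 1
        rw [lintegral_biUnion huc (fun x _ => Metric.isClosed_closedBall.measurableSet) hdisj]
    _ ≤ (ENNReal.ofReal ((10:ℝ)^d) * V * l⁻¹) * ∫⁻ y, f y := by
        gcongr; exact Measure.restrict_le_self
    _ ≤ _ := by
        gcongr; exact le_add_self

lemma layer (p : ℝ) (hp : 0 < p) (t : ℝ≥0∞) :
    t ^ p ≤ ∑' j : ℤ, 2 ^ (((j:ℝ)+1) * p) * (if (2:ℝ≥0∞) ^ (j:ℝ) < t then 1 else 0) := by
  by_cases h0 : t = 0
  · simp [h0, hp]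
  by_cases ht : t = ∞
  · rw [ht, ENNReal.top_rpow_of_pos hp]
    have : ∀ j : ℤ, (2:ℝ≥0∞) ^ (j:ℝ) < ∞ := fun j => (tw_ne_top _).lt_top
    simp only [this, if_true, mul_one]
    have h1 : ∑' n : ℕ, (1:ℝ≥0∞) ≤ ∑' n : ℕ, (fun j : ℤ => (2:ℝ≥0∞) ^ (((j:ℝ)+1) * p)) (n:ℤ) := by
      apply ENNReal.tsum_le_tsum
      intro n
      have : (2:ℝ≥0∞) ^ (0:ℝ) ≤ 2 ^ ((((n:ℤ):ℝ)+1) * p) := two_mono (by push_cast; positivity)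
      simpa using this
    rw [ENNReal.tsum_const_eq_top_of_ne_zero one_ne_zero] at h1
    exact h1.trans (ENNReal.tsum_comp_le_tsum_of_injective Nat.cast_injective
      (fun j : ℤ => (2:ℝ≥0∞) ^ (((j:ℝ)+1) * p)))
  obtain ⟨j, hj1, hj2⟩ := ENNReal.exists_mem_Ioc_zpow h0 ht (by norm_num : (1:ℝ≥0∞) < 2) (by norm_num)
  refine le_trans ?_ (ENNReal.le_tsum j)
  have e1 : (2:ℝ≥0∞) ^ (j:ℝ) < t := by simpa [ENNReal.rpow_intCast] using hj1
  rw [if_pos e1, mul_one, ENNReal.rpow_mul]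
  gcongr
  have : ((j:ℝ) + 1) = ((j+1 : ℤ) : ℝ) := by push_cast; ring
  rw [this, ENNReal.rpow_intCast]
  exact hj2


lemma geoml (a : ℝ) (ha : 0 < a) : ∃ K : ℝ≥0∞, K ≠ ∞ ∧ ∀ t : ℝ≥0∞,
    ∑' j : ℤ, 2 ^ (a * (j:ℝ)) * (if (2:ℝ≥0∞) ^ (j:ℝ) < t then 1 else 0) ≤ K * t ^ a := by
  obtain ⟨K, hK, -, h⟩ := geom a a ha ha
  refine ⟨K, hK, fun t => ?_⟩
  have h1 := h 1 (t ^ (2 * a))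
  rw [ENNReal.one_rpow, one_mul, ← ENNReal.rpow_mul, show 2 * a * (a / (a + a)) = a by field_simp; norm_num] at h1
  refine le_trans (ENNReal.tsum_le_tsum fun j => ?_) h1
  split_ifs with hj
  · rw [mul_one, one_mul, le_min_iff]
    refine ⟨le_rfl, ?_⟩
    calc (2:ℝ≥0∞) ^ (a * (j:ℝ)) = (2 ^ (j:ℝ)) ^ (2 * a) * 2 ^ (-a * (j:ℝ)) := by
          rw [← ENNReal.rpow_mul, ← two_add]; congr 1; ring
      _ ≤ _ := by gcongr
  · simp

lemma Mx_split (d : ℕ) (f : EE d → ℝ≥0∞) (hf : Measurable f) (c l : ℝ≥0∞)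
    (hc : c * (ENNReal.ofReal (2 ^ d) * volume (Metric.ball (0 : EE d) 1)) = 1 / 2) (x : EE d) :
    Mx d f x ≤ Mx d (Set.indicator {y | c * l < f y} f) x + l / 2 := by
  apply iSup_le
  intro k
  have h1 : ∀ y, f y ≤ Set.indicator {y | c * l < f y} f y + c * l := by
    intro y
    by_cases hy : c * l < f y
    · rw [Set.indicator_of_mem (by exact hy)]; exact le_self_add
    · exact (not_lt.mp hy).trans le_add_self
  calc av d k f x ≤ 2 ^ (-(d:ℝ) * (k:ℝ)) *
      ∫⁻ y in Metric.closedBall x (2 * 2 ^ (k:ℝ)), (Set.indicator {y | c * l < f y} f y + c * l) := by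
        rw [av]; gcongr with y; exact h1 y
    _ = av d k (Set.indicator {y | c * l < f y} f) x + l / 2 := by
        rw [lintegral_add_right _ measurable_const, mul_add, av]
        congr 1
        rw [setLIntegral_const, vol_ball d x 2 (by norm_num)]
        calc _ = (2 ^ (-((d:ℝ) * (k:ℝ))) * 2 ^ ((d:ℝ) * (k:ℝ))) * (c * (ENNReal.ofReal (2 ^ d) * volume (Metric.ball (0 : EE d) 1))) * l := by
              rw [neg_mul]; ring
          _ = _ := by rw [two_cancel, hc, one_mul, one_div, div_eq_mul_inv, mul_comm]
    _ ≤ _ := by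
        gcongr
        exact le_iSup (fun k => av d k (Set.indicator {y | c * l < f y} f) x) k

lemma strong (d : ℕ) (hd : 0 < d) (p : ℝ) (hp : 1 < p) : ∃ C : ℝ≥0∞, C ≠ ∞ ∧
    ∀ (f : EE d → ℝ≥0∞), Measurable f → ∫⁻ x, Mx d f x ^ p ≤ C * ∫⁻ x, f x ^ p := by
  obtain ⟨C, hC, hw⟩ := weak d hd
  obtain ⟨K, hK, hg⟩ := geoml (p-1) (by linarith)
  set V := volume (Metric.ball (0 : EE d) 1) with hV
  set W := ENNReal.ofReal (2 ^ d) * V with hW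
  have hW0 : W ≠ 0 := mul_ne_zero (by simp) (volV_ne_zero d)
  have hWt : W ≠ ∞ := ENNReal.mul_ne_top (by simp) (volV_ne_top d)
  set c : ℝ≥0∞ := (1/2) * W⁻¹ with hc
  have hcW : c * W = 1 / 2 := by rw [hc, mul_assoc, ENNReal.inv_mul_cancel hW0 hWt, mul_one]
  have hc0 : c ≠ 0 := mul_ne_zero (by simp) (by simpa using hWt)
  have hct : c ≠ ∞ := ENNReal.mul_ne_top (by simp) (by simpa using hW0)
  refine ⟨2 ^ p * (C * 2) * (K * (c⁻¹) ^ (p-1)), ?_, ?_⟩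
  · refine ENNReal.mul_ne_top (ENNReal.mul_ne_top (tw_ne_top _) (ENNReal.mul_ne_top hC (by simp))) (ENNReal.mul_ne_top hK ?_)
    exact ENNReal.rpow_ne_top_of_nonneg (by linarith) (by simpa using hc0)
  intro f hf
  have hM := Mx_meas d f hf
  have hbound : ∀ l : ℝ≥0∞, l ≠ 0 → l ≠ ∞ → volume {x | l < Mx d f x} ≤
      C * (2 * l⁻¹) * ∫⁻ x, f x * (if c * l < f x then 1 else 0) := by
    intro l hl0 hlt
    have hms : MeasurableSet {y | c * l < f y} := measurableSet_lt measurable_const hf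
    have h1 := hw (Set.indicator {y | c * l < f y} f) (hf.indicator hms) (l/2)
      (by simp [hl0]) (ENNReal.div_ne_top hlt (by simp))
    have e1 : (l/2)⁻¹ = 2 * l⁻¹ := by
      rw [ENNReal.inv_div (by simp) (by simp), div_eq_mul_inv]
    rw [e1] at h1
    have e2 : ∀ x, Set.indicator {y | c * l < f y} f x = f x * (if c * l < f x then 1 else 0) := by
      intro x; simp [Set.indicator_apply]
    simp_rw [e2] at h1
    refine le_trans (measure_mono fun x hx => ?_) h1
    change l < Mx d f x at hx
    change l / 2 < _
    by_contra hcon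
    have h3 := Mx_split d f hf c l hcW x
    have h4 : Mx d f x ≤ l / 2 + l / 2 := h3.trans (by gcongr; exact not_lt.mp hcon)
    rw [ENNReal.add_halves] at h4
    exact absurd hx (not_lt.mpr h4)
  calc ∫⁻ x, Mx d f x ^ p
      ≤ ∫⁻ x, ∑' j : ℤ, 2 ^ (((j:ℝ)+1) * p) * (if (2:ℝ≥0∞) ^ (j:ℝ) < Mx d f x then 1 else 0) :=
        lintegral_mono fun x => layer p (by linarith) _
    _ = ∑' j : ℤ, ∫⁻ x, 2 ^ (((j:ℝ)+1) * p) * (if (2:ℝ≥0∞) ^ (j:ℝ) < Mx d f x then 1 else 0) := by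
        rw [lintegral_tsum]
        intro j
        refine (Measurable.const_mul ?_ _).aemeasurable
        exact Measurable.ite (measurableSet_lt measurable_const hM) measurable_const measurable_const
    _ ≤ ∑' j : ℤ, 2 ^ (((j:ℝ)+1) * p) * (C * (2 * 2 ^ (-(j:ℝ))) * ∫⁻ x, f x * (if c * 2 ^ (j:ℝ) < f x then 1 else 0)) := by
        apply ENNReal.tsum_le_tsum
        intro j
        have hms : MeasurableSet {x | (2:ℝ≥0∞) ^ (j:ℝ) < Mx d f x} := measurableSet_lt measurable_const hM
        rw [lintegral_const_mul _ (Measurable.ite hms measurable_const measurable_const)]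
        gcongr
        have h5 := hbound (2 ^ (j:ℝ)) (tw_ne_zero _) (tw_ne_top _)
        rw [← ENNReal.rpow_neg] at h5
        refine le_trans (le_of_eq ?_) h5
        rw [← lintegral_indicator_one hms]
        congr 1; ext x
        simp [Set.indicator_apply]
    _ = ∑' j : ℤ, ∫⁻ x, 2 ^ p * (C * 2) * f x * (2 ^ ((p-1) * (j:ℝ)) * (if (2:ℝ≥0∞) ^ (j:ℝ) < c⁻¹ * f x then 1 else 0)) := by
        congr 1; ext j
        have hms : MeasurableSet {x | c * (2:ℝ≥0∞) ^ (j:ℝ) < f x} := measurableSet_lt measurable_const hf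
        have hmm : Measurable (fun x => f x * (if c * (2:ℝ≥0∞) ^ (j:ℝ) < f x then 1 else 0)) :=
          hf.mul (Measurable.ite hms measurable_const measurable_const)
        rw [← mul_assoc, ← lintegral_const_mul _ hmm]
        congr 1; ext x
        have e4 : c * (2:ℝ≥0∞) ^ (j:ℝ) < f x ↔ (2:ℝ≥0∞) ^ (j:ℝ) < c⁻¹ * f x := by
          rw [mul_comm c⁻¹, ← div_eq_mul_inv, ENNReal.lt_div_iff_mul_lt (Or.inl hc0) (Or.inl hct), mul_comm]
        simp only [e4]
        have e5 : (2:ℝ≥0∞) ^ (((j:ℝ)+1) * p) * 2 ^ (-(j:ℝ)) = 2 ^ p * 2 ^ ((p-1) * (j:ℝ)) := by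
          rw [← two_add, ← two_add]; congr 1; ring
        calc _ = ((2:ℝ≥0∞) ^ (((j:ℝ)+1) * p) * 2 ^ (-(j:ℝ))) * (C * 2) * f x * (if (2:ℝ≥0∞) ^ (j:ℝ) < c⁻¹ * f x then 1 else 0) := by ring
          _ = _ := by rw [e5]; ring
    _ = ∫⁻ x, ∑' j : ℤ, 2 ^ p * (C * 2) * f x * (2 ^ ((p-1) * (j:ℝ)) * (if (2:ℝ≥0∞) ^ (j:ℝ) < c⁻¹ * f x then 1 else 0)) := by
        rw [lintegral_tsum]
        intro j
        have hms : MeasurableSet {x | (2:ℝ≥0∞) ^ (j:ℝ) < c⁻¹ * f x} := measurableSet_lt measurable_const (hf.const_mul _)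
        exact ((hf.const_mul _).mul ((Measurable.ite hms measurable_const measurable_const).const_mul _)).aemeasurable
    _ ≤ ∫⁻ x, 2 ^ p * (C * 2) * (K * (c⁻¹) ^ (p-1)) * f x ^ p := by
        apply lintegral_mono
        intro x
        simp only
        rw [ENNReal.tsum_mul_left]
        calc _ ≤ 2 ^ p * (C * 2) * f x * (K * (c⁻¹ * f x) ^ (p-1)) := by gcongr; exact hg _
          _ = 2 ^ p * (C * 2) * (K * (c⁻¹) ^ (p-1)) * (f x ^ (1:ℝ) * f x ^ (p-1)) := by
            rw [ENNReal.mul_rpow_of_nonneg _ _ (by linarith), ENNReal.rpow_one]; ring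
          _ = _ := by
            rw [← ENNReal.rpow_add_of_nonneg _ _ (by norm_num) (by linarith)]; ring_nf
    _ = _ := lintegral_const_mul _ (hf.pow_const _)


noncomputable def TT (d : ℕ) (θ : ℝ) (k : ℤ) (f g : EE d → ℝ≥0∞) (x : EE d) : ℝ≥0∞ :=
  2 ^ (-(d:ℝ) * (k:ℝ)) * ∫⁻ y in Metric.closedBall (0 : EE d) (2 ^ (k:ℝ)),
    f (x + (θ - 1) • y) * g (x + θ • y)

lemma TT_meas (d : ℕ) (θ : ℝ) (k : ℤ) (f g : EE d → ℝ≥0∞) (hf : Measurable f) (hg : Measurable g) :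
    Measurable (TT d θ k f g) := by
  apply Measurable.const_mul
  apply Measurable.lintegral_prod_right'
    (f := fun z : EE d × EE d => f (z.1 + (θ - 1) • z.2) * g (z.1 + θ • z.2))
  exact (hf.comp (by fun_prop)).mul (hg.comp (by fun_prop))

lemma av_size (d : ℕ) (p : ℝ) (hp : 1 ≤ p) : ∃ C : ℝ≥0∞, C ≠ ∞ ∧
    ∀ (f : EE d → ℝ≥0∞), Measurable f → ∫⁻ x, f x ^ p ≤ 1 → ∀ (k : ℤ) (x : EE d),
      av d k f x ^ p ≤ C * 2 ^ (-(d:ℝ) * (k:ℝ)) := by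
  set W := ENNReal.ofReal (2 ^ d) * volume (Metric.ball (0 : EE d) 1) with hW
  have hWt : W ≠ ∞ := ENNReal.mul_ne_top (by simp) (volV_ne_top d)
  refine ⟨W ^ (p-1), ENNReal.rpow_ne_top_of_nonneg (by linarith) hWt, fun f hf h1 k x => ?_⟩
  have hj := jens (volume.restrict (Metric.closedBall x (2 * 2 ^ (k:ℝ)))) p hp (fun _ => 1) f
    aemeasurable_const hf.aemeasurable
  simp only [one_mul, lintegral_const, Measure.restrict_apply_univ] at hj
  rw [vol_ball d x 2 (by norm_num)] at hj
  rw [av, ENNReal.mul_rpow_of_nonneg _ _ (by linarith), ← ENNReal.rpow_mul]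
  have h2 : ∫⁻ y in Metric.closedBall x (2 * 2 ^ (k:ℝ)), f y ^ p ≤ 1 :=
    (lintegral_mono' Measure.restrict_le_self le_rfl).trans h1
  calc _ ≤ (2:ℝ≥0∞) ^ (-(d:ℝ) * (k:ℝ) * p) * ((ENNReal.ofReal (2 ^ d) * 2 ^ ((d:ℝ) * (k:ℝ)) * volume (Metric.ball (0 : EE d) 1)) ^ (p-1) * 1) := by
        gcongr
        exact hj.trans (by gcongr)
    _ = (2:ℝ≥0∞) ^ (-(d:ℝ) * (k:ℝ) * p) * ((W * 2 ^ ((d:ℝ) * (k:ℝ))) ^ (p-1)) := by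
        rw [hW, mul_one]; congr 2; ring
    _ = W ^ (p-1) * (2 ^ (-(d:ℝ) * (k:ℝ) * p) * 2 ^ ((d:ℝ) * (k:ℝ) * (p-1))) := by
        rw [ENNReal.mul_rpow_of_nonneg _ _ (by linarith), ← ENNReal.rpow_mul]; ring
    _ = _ := by
        rw [← two_add]; congr 2; ring

lemma dil (d : ℕ) (θ : ℝ) (hθ0 : 0 ≤ θ) (hθ : θ ≤ 1/2) (F : EE d → ℝ≥0∞) (hF : Measurable F) (x : EE d) :
    ∫⁻ y, F (x + (θ - 1) • y) ≤ 2 ^ d * ∫⁻ y, F y := by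
  have hne : θ - 1 ≠ 0 := by linarith
  have h1 : ∫⁻ y, F (x + (θ - 1) • y) = ∫⁻ y, F (x + y) ∂(Measure.map (fun y : EE d => (θ - 1) • y) volume) := by
    rw [lintegral_map (f := fun y => F (x + y)) (g := fun y : EE d => (θ - 1) • y) (by fun_prop) (by fun_prop)]
  rw [h1]
  have h2 := Measure.map_addHaar_smul (volume : Measure (EE d)) hne
  have h3 : Measure.map (fun y : EE d => (θ - 1) • y) volume = ENNReal.ofReal |((θ-1) ^ d)⁻¹| • (volume : Measure (EE d)) := by
    rw [finrank_euclideanSpace_fin] at h2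
    exact h2
  rw [h3, lintegral_smul_measure, lintegral_add_left_eq_self, smul_eq_mul]
  gcongr
  have : ((2:ℝ≥0∞)) ^ d = ENNReal.ofReal (2 ^ d) := by
    rw [ENNReal.ofReal_pow (by norm_num)]; simp
  rw [this]
  apply ENNReal.ofReal_le_ofReal
  rw [abs_inv, abs_pow, ← inv_pow]
  apply pow_le_pow_left₀ (by positivity)
  rw [abs_of_nonpos (by linarith)]
  rw [inv_le_comm₀ (by linarith) (by norm_num)]
  linarith

lemma bil (d : ℕ) (θ : ℝ) (F G : EE d → ℝ≥0∞) (hF : Measurable F) (hG : Measurable G) :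
    ∫⁻ x, ∫⁻ y, F (x + (θ - 1) • y) * G (x + θ • y) = (∫⁻ x, F x) * ∫⁻ x, G x := by
  rw [lintegral_lintegral_swap ((hF.comp (by fun_prop)).mul (hG.comp (by fun_prop))).aemeasurable]
  have h1 : ∀ y : EE d, ∫⁻ x, F (x + (θ - 1) • y) * G (x + θ • y) = ∫⁻ x, F (x - y) * G x := by
    intro y
    rw [← lintegral_add_right_eq_self (fun x => F (x - y) * G x) (θ • y)]
    congr 1; ext x
    congr 2
    rw [sub_smul, one_smul]; abel
  simp_rw [h1]
  rw [lintegral_lintegral_swap ((hF.comp (by fun_prop)).mul (hG.comp (by fun_prop))).aemeasurable]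
  have h2 : ∀ x : EE d, ∫⁻ y, F (x - y) * G x = (∫⁻ y, F y) * G x := by
    intro x
    rw [lintegral_mul_const (G x) (f := fun y => F (x - y)) (by fun_prop), lintegral_sub_left_eq_self]
  simp_rw [h2]
  rw [lintegral_const_mul _ hG]

lemma local_s (d : ℕ) (θ : ℝ) (hθ0 : 0 ≤ θ) (hθ : θ ≤ 1/2) (s : ℝ) (hs : 1 ≤ s) (f g : EE d → ℝ≥0∞)
    (hf : Measurable f) (hg : Measurable g) (k : ℤ) (z : EE d) :
    ∫⁻ x in Metric.closedBall z (2 ^ (k:ℝ)), TT d θ k f g x ^ s ≤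
      (2 ^ d) ^ (s - 1) * 2 ^ ((d:ℝ) * (k:ℝ)) * av d k f z ^ s * av d k (fun x => g x ^ s) z := by
  set B := Metric.closedBall z (2 * 2 ^ (k:ℝ)) with hB
  have hBm : MeasurableSet B := Metric.isClosed_closedBall.measurableSet
  set F := B.indicator f with hF
  set G := B.indicator (fun x => g x ^ s) with hG
  have hFm : Measurable F := hf.indicator hBm
  have hGm : Measurable G := (hg.pow_const _).indicator hBm
  have hmem : ∀ x ∈ Metric.closedBall z ((2:ℝ) ^ (k:ℝ)), ∀ y ∈ Metric.closedBall (0:EE d) ((2:ℝ) ^ (k:ℝ)),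
      ∀ c : ℝ, |c| ≤ 1 → x + c • y ∈ B := by
    intro x hx y hy c hc
    rw [Metric.mem_closedBall, dist_eq_norm] at hx hy ⊢
    rw [sub_zero] at hy
    calc ‖x + c • y - z‖ = ‖(x - z) + c • y‖ := by congr 1; abel
      _ ≤ ‖x - z‖ + ‖c • y‖ := norm_add_le _ _
      _ ≤ 2 ^ (k:ℝ) + 1 * 2 ^ (k:ℝ) := by
        rw [norm_smul, Real.norm_eq_abs]; gcongr
      _ = _ := by ring
  set r := (2:ℝ≥0∞) ^ (-(d:ℝ) * (k:ℝ)) with hr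
  have hpt : ∀ x ∈ Metric.closedBall z ((2:ℝ) ^ (k:ℝ)), TT d θ k f g x ^ s ≤
      r ^ s * (2 ^ d * ∫⁻ y, F y) ^ (s-1) * ∫⁻ y, F (x + (θ - 1) • y) * G (x + θ • y) := by
    intro x hx
    rw [TT, ENNReal.mul_rpow_of_nonneg _ _ (by linarith), mul_assoc]
    gcongr
    refine (jens _ s hs _ _ (hf.comp (by fun_prop)).aemeasurable (hg.comp (by fun_prop)).aemeasurable).trans ?_
    have a1 : |θ - 1| ≤ 1 := by rw [abs_le]; constructor <;> linarith
    have a2 : |θ| ≤ 1 := by rw [abs_le]; constructor <;> linarith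
    have hcm : MeasurableSet (Metric.closedBall (0:EE d) ((2:ℝ) ^ (k:ℝ))) := Metric.isClosed_closedBall.measurableSet
    refine mul_le_mul' (ENNReal.rpow_le_rpow ?_ (by linarith)) ?_
    · refine le_trans ?_ (dil d θ hθ0 hθ F hFm x)
      rw [← lintegral_indicator hcm]
      apply lintegral_mono
      intro y
      by_cases hy : y ∈ Metric.closedBall (0:EE d) ((2:ℝ) ^ (k:ℝ))
      · simp only [Set.indicator_of_mem hy, hF, Set.indicator_of_mem (hmem x hx y hy _ a1)]
        exact le_rfl
      · simp only [Set.indicator_of_notMem hy]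
        exact zero_le
    · rw [← lintegral_indicator hcm]
      apply lintegral_mono
      intro y
      by_cases hy : y ∈ Metric.closedBall (0:EE d) ((2:ℝ) ^ (k:ℝ))
      · simp only [Set.indicator_of_mem hy, hF, hG, Set.indicator_of_mem (hmem x hx y hy _ a1), Set.indicator_of_mem (hmem x hx y hy _ a2)]
        exact le_rfl
      · simp only [Set.indicator_of_notMem hy]
        exact zero_le
  have hm2 : Measurable (fun x => ∫⁻ y, F (x + (θ - 1) • y) * G (x + θ • y)) :=
    Measurable.lintegral_prod_right' (f := fun z : EE d × EE d => F (z.1 + (θ - 1) • z.2) * G (z.1 + θ • z.2))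
      ((hFm.comp (by fun_prop)).mul (hGm.comp (by fun_prop)))
  have hFa : ∫⁻ y, F y = 2 ^ ((d:ℝ) * (k:ℝ)) * av d k f z := by
    rw [hF, lintegral_indicator hBm, av, ← mul_assoc, neg_mul, mul_comm ((2:ℝ≥0∞) ^ _), two_cancel, one_mul]
  have hGa : ∫⁻ y, G y = 2 ^ ((d:ℝ) * (k:ℝ)) * av d k (fun x => g x ^ s) z := by
    rw [hG, lintegral_indicator hBm, av, ← mul_assoc, neg_mul, mul_comm ((2:ℝ≥0∞) ^ _), two_cancel, one_mul]
  calc _ ≤ ∫⁻ x in Metric.closedBall z (2 ^ (k:ℝ)), r ^ s * (2 ^ d * ∫⁻ y, F y) ^ (s-1) * ∫⁻ y, F (x + (θ - 1) • y) * G (x + θ • y) :=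
        setLIntegral_mono (hm2.const_mul _) hpt
    _ ≤ ∫⁻ x, r ^ s * (2 ^ d * ∫⁻ y, F y) ^ (s-1) * ∫⁻ y, F (x + (θ - 1) • y) * G (x + θ • y) :=
        lintegral_mono' Measure.restrict_le_self le_rfl
    _ = r ^ s * (2 ^ d * ∫⁻ y, F y) ^ (s-1) * ((∫⁻ y, F y) * ∫⁻ y, G y) := by
        rw [lintegral_const_mul _ hm2, bil d θ F G hFm hGm]
    _ = (2 ^ d) ^ (s - 1) * (r ^ s * (2 ^ ((d:ℝ) * (k:ℝ))) ^ (s-1) * 2 ^ ((d:ℝ) * (k:ℝ))) * 2 ^ ((d:ℝ) * (k:ℝ)) * (av d k f z ^ (s-1) * av d k f z ^ (1:ℝ)) * av d k (fun x => g x ^ s) z := by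
        rw [hFa, hGa, ENNReal.mul_rpow_of_nonneg _ _ (by linarith : 0 ≤ s-1), ENNReal.mul_rpow_of_nonneg _ _ (by linarith : 0 ≤ s-1), ENNReal.rpow_one]
        ring
    _ = _ := by
        rw [← ENNReal.rpow_add_of_nonneg _ _ (by linarith : 0 ≤ s-1) (by norm_num), sub_add_cancel, hr,
          ← ENNReal.rpow_mul, ← ENNReal.rpow_mul, ← two_add, ← two_add]
        have : -(d:ℝ) * (k:ℝ) * s + (d:ℝ) * (k:ℝ) * (s-1) + (d:ℝ) * (k:ℝ) = 0 := by ring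
        rw [this]; simp

lemma avg_id (d : ℕ) (R : ℝ) (H : EE d → ℝ≥0∞) (hH : Measurable H) :
    ∫⁻ z, ∫⁻ x in Metric.closedBall z R, H x = volume (Metric.closedBall (0:EE d) R) * ∫⁻ x, H x := by
  have h : ∀ x : EE d, ∫⁻ y in Metric.closedBall x R, H y =
      ∫⁻ y, Set.indicator {z : EE d × EE d | dist z.2 z.1 ≤ R} (fun z => H z.2) (x, y) := by
    intro x
    rw [← lintegral_indicator Metric.isClosed_closedBall.measurableSet]
    rfl
  have hm : Measurable (Set.indicator {z : EE d × EE d | dist z.2 z.1 ≤ R} (fun z => H z.2)) := by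
    apply Measurable.indicator (hH.comp measurable_snd)
    exact measurableSet_le (by fun_prop) (by fun_prop)
  simp_rw [h]
  rw [lintegral_lintegral_swap (f := fun x y => Set.indicator {z : EE d × EE d | dist z.2 z.1 ≤ R} (fun z => H z.2) (x, y)) hm.aemeasurable]
  have h2 : ∀ y : EE d, ∫⁻ x, Set.indicator {z : EE d × EE d | dist z.2 z.1 ≤ R} (fun z => H z.2) (x, y) =
      volume (Metric.closedBall (0:EE d) R) * H y := by
    intro y
    have : ∀ x, Set.indicator {z : EE d × EE d | dist z.2 z.1 ≤ R} (fun z => H z.2) (x, y) =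
        (Metric.closedBall y R).indicator (fun _ => H y) x := by
      intro x
      by_cases hxy : dist y x ≤ R
      · rw [Set.indicator_of_mem (by exact hxy), Set.indicator_of_mem (by rwa [Metric.mem_closedBall, dist_comm])]
      · rw [Set.indicator_of_notMem (by exact hxy), Set.indicator_of_notMem (by rwa [Metric.mem_closedBall, dist_comm])]
    simp_rw [this]
    rw [lintegral_indicator Metric.isClosed_closedBall.measurableSet, setLIntegral_const,
      Measure.addHaar_closedBall_center, mul_comm]
  simp_rw [h2]
  rw [lintegral_const_mul _ hH]


lemma L5 (d : ℕ) (r s : ℝ) (hr : 0 < r) (hrs : r ≤ s) (hs : 1 ≤ s) : ∃ C : ℝ≥0∞, C ≠ ∞ ∧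
    ∀ θ : ℝ, 0 ≤ θ → θ ≤ 1/2 → ∀ f g : EE d → ℝ≥0∞, Measurable f → Measurable g → ∀ k : ℤ,
      ∫⁻ x, TT d θ k f g x ^ r ≤
        C * ∫⁻ x, av d k f x ^ r * av d k (fun x => g x ^ s) x ^ (r / s) := by
  set V := volume (Metric.ball (0 : EE d) 1) with hV
  have hs0 : 0 < s := by linarith
  have hV0 : V ≠ 0 := volV_ne_zero d
  have hVt : V ≠ ∞ := volV_ne_top d
  have hsr : 1 ≤ s / r := by rw [le_div_iff₀ hr]; linarith
  set c : ℝ≥0∞ := (2 ^ d) ^ (s - 1) with hc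
  have hct : c ≠ ∞ := ENNReal.rpow_ne_top_of_nonneg (by linarith) (by finiteness)
  refine ⟨V⁻¹ * (V ^ (s/r - 1) * c) ^ (r / s), ?_, ?_⟩
  · refine ENNReal.mul_ne_top (by simpa using hV0) (ENNReal.rpow_ne_top_of_nonneg (by positivity) ?_)
    exact ENNReal.mul_ne_top (ENNReal.rpow_ne_top_of_nonneg (by linarith) hVt) hct
  intro θ hθ0 hθ f g hf hg k
  have hT := TT_meas d θ k f g hf hg
  set D := (2:ℝ≥0∞) ^ ((d:ℝ) * (k:ℝ)) with hD
  have hD0 : D ≠ 0 := tw_ne_zero _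
  have hDt : D ≠ ∞ := tw_ne_top _
  have hvol : ∀ z : EE d, volume (Metric.closedBall z ((2:ℝ) ^ (k:ℝ))) = D * V := by
    intro z
    have := vol_ball d z 1 (by norm_num) k
    simpa using this
  have hz : ∀ z : EE d, ∫⁻ x in Metric.closedBall z ((2:ℝ) ^ (k:ℝ)), TT d θ k f g x ^ r ≤
      (V ^ (s/r - 1) * c) ^ (r / s) * D * (av d k f z ^ r * av d k (fun x => g x ^ s) z ^ (r / s)) := by
    intro z
    have hj := jens (volume.restrict (Metric.closedBall z ((2:ℝ) ^ (k:ℝ)))) (s/r) hsr (fun _ => 1)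
      (fun x => TT d θ k f g x ^ r) aemeasurable_const (hT.pow_const _).aemeasurable
    simp only [one_mul, lintegral_const, Measure.restrict_apply_univ, ← ENNReal.rpow_mul] at hj
    rw [show r * (s / r) = s by field_simp, hvol] at hj
    have hj2 := hj.trans (mul_le_mul_right (local_s d θ hθ0 hθ s hs f g hf hg k z) _)
    have hj3 := ENNReal.rpow_le_rpow hj2 (by positivity : 0 ≤ r / s)
    rw [← ENNReal.rpow_mul, show s / r * (r / s) = 1 by field_simp, ENNReal.rpow_one] at hj3
    refine hj3.trans (le_of_eq ?_)
    have hrs' : 0 ≤ r / s := by positivity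
    calc _ = ((V ^ (s/r - 1) * c) * (D ^ (s/r-1) * D ^ (1:ℝ)) * (av d k f z ^ s * av d k (fun x => g x ^ s) z)) ^ (r/s) := by
          congr 1
          rw [ENNReal.mul_rpow_of_nonneg _ _ (by linarith : 0 ≤ s/r - 1), ENNReal.rpow_one]; ring
      _ = _ := by
          rw [← ENNReal.rpow_add _ _ hD0 hDt, sub_add_cancel, ENNReal.mul_rpow_of_nonneg _ _ hrs',
            ENNReal.mul_rpow_of_nonneg _ _ hrs', ENNReal.mul_rpow_of_nonneg _ _ hrs',
            ENNReal.mul_rpow_of_nonneg (av d k f z ^ s) _ hrs',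
            ← ENNReal.rpow_mul D, ← ENNReal.rpow_mul (av d k f z), show s / r * (r / s) = 1 by field_simp,
            show s * (r / s) = r by field_simp, ENNReal.rpow_one]
  have hav := avg_id d ((2:ℝ) ^ (k:ℝ)) (fun x => TT d θ k f g x ^ r) (hT.pow_const _)
  rw [hvol] at hav
  have hm : Measurable (fun z => av d k f z ^ r * av d k (fun x => g x ^ s) z ^ (r / s)) :=
    ((av_meas d k f hf).pow_const _).mul ((av_meas d k _ (hg.pow_const s)).pow_const _)
  have hfin : D * V * ∫⁻ x, TT d θ k f g x ^ r ≤ (V ^ (s/r - 1) * c) ^ (r / s) * D * ∫⁻ z, (av d k f z ^ r * av d k (fun x => g x ^ s) z ^ (r / s)) := by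
    rw [← hav, ← lintegral_const_mul _ hm]
    exact lintegral_mono hz
  calc ∫⁻ x, TT d θ k f g x ^ r = (D⁻¹ * D) * (V⁻¹ * V) * ∫⁻ x, TT d θ k f g x ^ r := by
        rw [ENNReal.inv_mul_cancel hD0 hDt, ENNReal.inv_mul_cancel hV0 hVt]; simp
    _ = D⁻¹ * V⁻¹ * (D * V * ∫⁻ x, TT d θ k f g x ^ r) := by ring
    _ ≤ D⁻¹ * V⁻¹ * ((V ^ (s/r - 1) * c) ^ (r / s) * D * ∫⁻ z, (av d k f z ^ r * av d k (fun x => g x ^ s) z ^ (r / s))) := by gcongr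
    _ = (D⁻¹ * D) * (V⁻¹ * (V ^ (s/r - 1) * c) ^ (r / s) * ∫⁻ z, (av d k f z ^ r * av d k (fun x => g x ^ s) z ^ (r / s))) := by ring
    _ = _ := by rw [ENNReal.inv_mul_cancel hD0 hDt, one_mul]

lemma L6 (d : ℕ) (hd : 0 < d) (α p q r s : ℝ) (hα : 0 < α) (hp : 1 < p) (hr : 0 < r) (hrs : r ≤ s) (hs : 1 ≤ s)
    (hsq : s < q) (h : 1 / p + 1 / q = 1 / r + α / d) : ∃ C : ℝ≥0∞, C ≠ ∞ ∧
    ∀ θ : ℝ, 0 ≤ θ → θ ≤ 1/2 → ∀ f g : EE d → ℝ≥0∞, Measurable f → Measurable g →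
      ∫⁻ x, f x ^ p ≤ 1 → ∫⁻ x, g x ^ q ≤ 1 →
      ∑' k : ℤ, 2 ^ (α * r * (k:ℝ)) * ∫⁻ x, TT d θ k f g x ^ r ≤ C := by
  have hs0 : 0 < s := by linarith
  have hp0 : 0 < p := by linarith
  have hq0 : 0 < q := by linarith
  have hd0 : (0:ℝ) < d := by exact_mod_cast hd
  have hqs : 1 < q / s := by rw [lt_div_iff₀ hs0]; linarith
  obtain ⟨C5, hC5, h5⟩ := L5 d r s hr hrs hs
  obtain ⟨Cf, hCf, hsf⟩ := av_size d p hp.le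
  obtain ⟨Cg, hCg, hsg⟩ := av_size d (q/s) hqs.le
  obtain ⟨Mf, hMf, hmf⟩ := strong d hd p hp
  obtain ⟨Mg, hMg, hmg⟩ := strong d hd (q/s) hqs
  obtain ⟨K, hK, -, hk⟩ := geom (α * r) d (by positivity) hd0
  set β := r * (1/p + 1/q) with hβ
  have hβ0 : 0 ≤ β := by positivity
  have hβ1 : β = 1 + α * r / d := by rw [hβ, h]; field_simp
  set N : ℝ≥0∞ := max Cf Cg with hN
  have hNt : N ≠ ∞ := by simp [hN, hCf, hCg]
  have e1 : β * (d / (α * r + d)) = 1 := by rw [hβ1]; field_simp; ring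
  refine ⟨C5 * (K * (N ^ β) ^ (α * r / (α * r + d)) * (Mf + Mg)), ?_, ?_⟩
  · refine ENNReal.mul_ne_top hC5 (ENNReal.mul_ne_top (ENNReal.mul_ne_top hK ?_) (ENNReal.add_ne_top.2 ⟨hMf, hMg⟩))
    exact ENNReal.rpow_ne_top_of_nonneg (by positivity) (ENNReal.rpow_ne_top_of_nonneg hβ0 hNt)
  intro θ hθ0 hθ f g hf hg hf1 hg1
  have hgs : Measurable (fun x => g x ^ s) := hg.pow_const s
  have hg1' : ∫⁻ x, (g x ^ s) ^ (q/s) ≤ 1 := by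
    simp_rw [← ENNReal.rpow_mul, show s * (q/s) = q by field_simp]
    exact hg1
  set m : EE d → ℝ≥0∞ := fun x => max (Mx d f x ^ p) (Mx d (fun x => g x ^ s) x ^ (q/s)) with hm
  have hmint : ∫⁻ x, m x ≤ Mf + Mg := by
    calc ∫⁻ x, m x ≤ ∫⁻ x, (Mx d f x ^ p + Mx d (fun x => g x ^ s) x ^ (q/s)) :=
          lintegral_mono fun x => max_le_add_of_nonneg zero_le zero_le
      _ = (∫⁻ x, Mx d f x ^ p) + ∫⁻ x, Mx d (fun x => g x ^ s) x ^ (q/s) :=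
          lintegral_add_left ((Mx_meas d f hf).pow_const _) _
      _ ≤ Mf * 1 + Mg * 1 := by
          gcongr
          · exact (hmf f hf).trans (by gcongr)
          · exact (hmg _ hgs).trans (by gcongr)
      _ = _ := by simp
  have hmm : Measurable m := ((Mx_meas d f hf).pow_const _).max ((Mx_meas d _ hgs).pow_const _)
  -- generic product bound
  have hprod : ∀ (a b t : ℝ≥0∞), a ^ p ≤ t → b ^ (q/s) ≤ t → a ^ r * b ^ (r/s) ≤ t ^ β := by
    intro a b t ha hb
    have ha' : a ^ r ≤ t ^ (r/p) := by
      have := ENNReal.rpow_le_rpow ha (by positivity : 0 ≤ r/p)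
      rwa [← ENNReal.rpow_mul, show p * (r/p) = r by field_simp] at this
    have hb' : b ^ (r/s) ≤ t ^ (r/q) := by
      have := ENNReal.rpow_le_rpow hb (by positivity : 0 ≤ r/q)
      rwa [← ENNReal.rpow_mul, show q/s * (r/q) = r/s by field_simp] at this
    calc _ ≤ t ^ (r/p) * t ^ (r/q) := mul_le_mul' ha' hb'
      _ = _ := by
        rw [← ENNReal.rpow_add_of_nonneg _ _ (by positivity) (by positivity), hβ]; congr 1; ring
  have hpt : ∀ x, ∑' k : ℤ, 2 ^ (α * r * (k:ℝ)) * (av d k f x ^ r * av d k (fun x => g x ^ s) x ^ (r / s)) ≤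
      K * (N ^ β) ^ (α * r / (α * r + d)) * m x := by
    intro x
    have hk' := hk (m x ^ β) (N ^ β)
    rw [← ENNReal.rpow_mul, e1, ENNReal.rpow_one] at hk'
    refine le_trans (ENNReal.tsum_le_tsum fun k => ?_) (hk'.trans (le_of_eq (by ring)))
    have b1 := hprod (av d k f x) (av d k (fun x => g x ^ s) x) (m x)
      ((ENNReal.rpow_le_rpow (le_iSup (fun k => av d k f x) k) hp0.le).trans (le_max_left _ _))
      ((ENNReal.rpow_le_rpow (le_iSup (fun k => av d k (fun x => g x ^ s) x) k) (by positivity)).trans (le_max_right _ _))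
    have b2 := hprod (av d k f x) (av d k (fun x => g x ^ s) x) (N * 2 ^ (-(d:ℝ) * (k:ℝ)))
      ((hsf f hf hf1 k x).trans (by gcongr; exact le_max_left _ _))
      ((hsg _ hgs hg1' k x).trans (by gcongr; exact le_max_right _ _))
    rw [ENNReal.mul_rpow_of_nonneg _ _ hβ0, ← ENNReal.rpow_mul] at b2
    refine le_min ?_ ?_
    · rw [mul_comm]; gcongr
    · calc _ ≤ 2 ^ (α * r * (k:ℝ)) * (N ^ β * 2 ^ (-(d:ℝ) * (k:ℝ) * β)) := by gcongr
        _ = N ^ β * (2 ^ (α * r * (k:ℝ)) * 2 ^ (-(d:ℝ) * (k:ℝ) * β)) := by ring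
        _ = _ := by
          rw [← two_add]; congr 2; rw [hβ1]; field_simp; ring
  have hmeas : ∀ k : ℤ, Measurable (fun x => av d k f x ^ r * av d k (fun x => g x ^ s) x ^ (r / s)) :=
    fun k => ((av_meas d k f hf).pow_const _).mul ((av_meas d k _ hgs).pow_const _)
  calc _ ≤ ∑' k : ℤ, C5 * ∫⁻ x, 2 ^ (α * r * (k:ℝ)) * (av d k f x ^ r * av d k (fun x => g x ^ s) x ^ (r / s)) := by
        apply ENNReal.tsum_le_tsum
        intro k
        rw [lintegral_const_mul _ (hmeas k)]
        calc _ ≤ 2 ^ (α * r * (k:ℝ)) * (C5 * ∫⁻ x, av d k f x ^ r * av d k (fun x => g x ^ s) x ^ (r / s)) := by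
              gcongr; exact h5 θ hθ0 hθ f g hf hg k
          _ = _ := by ring
    _ = C5 * ∫⁻ x, ∑' k : ℤ, 2 ^ (α * r * (k:ℝ)) * (av d k f x ^ r * av d k (fun x => g x ^ s) x ^ (r / s)) := by
        rw [ENNReal.tsum_mul_left, lintegral_tsum]
        exact fun k => ((hmeas k).const_mul _).aemeasurable
    _ ≤ C5 * ∫⁻ x, K * (N ^ β) ^ (α * r / (α * r + d)) * m x := by
        gcongr with x; exact hpt x
    _ ≤ _ := by
        rw [lintegral_const_mul _ hmm]; gcongr


lemma ker (d : ℕ) (α : ℝ) (hαd : α < d) (y : EE d) :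
    ENNReal.ofReal (‖y‖ ^ (α - (d:ℝ))) ≤ 2 ^ ((d:ℝ) - α) * ∑' k : ℤ, 2 ^ ((α - (d:ℝ)) * (k:ℝ)) *
      (Metric.closedBall (0:EE d) ((2:ℝ) ^ (k:ℝ))).indicator (fun _ => 1) y := by
  by_cases hy : y = 0
  · rw [hy, norm_zero, Real.zero_rpow (by linarith)]; simp
  have hn : 0 < ‖y‖ := norm_pos_iff.mpr hy
  obtain ⟨k, hk1, hk2⟩ := exists_mem_Ioc_zpow hn (by norm_num : (1:ℝ) < 2)
  rw [← Real.rpow_intCast] at hk1 hk2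
  have hmem : y ∈ Metric.closedBall (0:EE d) ((2:ℝ) ^ (((k+1 : ℤ)):ℝ)) := by
    rw [mem_closedBall_zero_iff]; exact hk2
  refine le_trans ?_ (mul_le_mul_right (ENNReal.le_tsum (k+1)) _)
  rw [Set.indicator_of_mem hmem, mul_one, ← two_add]
  have h1 : ‖y‖ ^ (α - (d:ℝ)) ≤ (2:ℝ) ^ ((k:ℝ) * (α - (d:ℝ))) := by
    rw [Real.rpow_mul (by norm_num)]
    exact Real.rpow_le_rpow_of_nonpos (by positivity) hk1.le (by linarith)
  refine (ENNReal.ofReal_le_ofReal h1).trans (le_of_eq ?_)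
  rw [← ENNReal.ofReal_rpow_of_pos (by norm_num)]
  push_cast
  rw [ENNReal.ofReal_ofNat]
  congr 1; ring

lemma Iop_le (d : ℕ) (α θ : ℝ) (hαd : α < d) (f g : EE d → ℝ≥0∞) (hf : Measurable f) (hg : Measurable g)
    (x : EE d) : Iop d α θ f g x ≤ 2 ^ ((d:ℝ) - α) * ∑' k : ℤ, 2 ^ (α * (k:ℝ)) * TT d θ k f g x := by
  have hcm : ∀ k : ℤ, MeasurableSet (Metric.closedBall (0:EE d) ((2:ℝ) ^ (k:ℝ))) :=
    fun k => Metric.isClosed_closedBall.measurableSet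
  have hfg : Measurable (fun y => f (x + (θ - 1) • y) * g (x + θ • y)) :=
    (hf.comp (by fun_prop)).mul (hg.comp (by fun_prop))
  have hfk : ∀ k : ℤ, Measurable (fun y => 2 ^ ((α - (d:ℝ)) * (k:ℝ)) *
        (Metric.closedBall (0:EE d) ((2:ℝ) ^ (k:ℝ))).indicator (fun y => f (x + (θ - 1) • y) * g (x + θ • y)) y) :=
    fun k => (hfg.indicator (hcm k)).const_mul _
  calc Iop d α θ f g x ≤ ∫⁻ y, 2 ^ ((d:ℝ) - α) * ∑' k : ℤ, 2 ^ ((α - (d:ℝ)) * (k:ℝ)) *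
        (Metric.closedBall (0:EE d) ((2:ℝ) ^ (k:ℝ))).indicator (fun y => f (x + (θ - 1) • y) * g (x + θ • y)) y := by
        apply lintegral_mono
        intro y
        refine (mul_le_mul_right (ker d α hαd y) _).trans (le_of_eq ?_)
        rw [mul_left_comm, ← ENNReal.tsum_mul_left]
        congr 2; ext k
        by_cases hy : y ∈ Metric.closedBall (0:EE d) ((2:ℝ) ^ (k:ℝ))
        · rw [Set.indicator_of_mem hy, Set.indicator_of_mem hy]; ring
        · rw [Set.indicator_of_notMem hy, Set.indicator_of_notMem hy]; ring
    _ = 2 ^ ((d:ℝ) - α) * ∑' k : ℤ, ∫⁻ y, 2 ^ ((α - (d:ℝ)) * (k:ℝ)) *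
        (Metric.closedBall (0:EE d) ((2:ℝ) ^ (k:ℝ))).indicator (fun y => f (x + (θ - 1) • y) * g (x + θ • y)) y := by
        rw [lintegral_const_mul _ (Measurable.tsum hfk), lintegral_tsum fun k => (hfk k).aemeasurable]
    _ = _ := by
        congr 2; ext k
        rw [lintegral_const_mul _ (hfg.indicator (hcm k)), lintegral_indicator (hcm k), TT, ← mul_assoc, ← two_add]
        congr 2; ring

lemma L7 (d : ℕ) (hd : 0 < d) (α p q r : ℝ) (hα : 0 < α) (hαd : α < d) (hp : 1 < p) (hq : 1 < q)
    (hr : 0 < r) (hrq : r < q) (h : 1 / p + 1 / q = 1 / r + α / d) : ∃ C : ℝ≥0∞, C ≠ ∞ ∧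
    ∀ θ : ℝ, 0 ≤ θ → θ ≤ 1/2 → ∀ f g : EE d → ℝ≥0∞, Measurable f → Measurable g →
      ∫⁻ x, f x ^ p ≤ 1 → ∫⁻ x, g x ^ q ≤ 1 → LpNorm d r (Iop d α θ f g) ≤ C := by
  have hd0 : (0:ℝ) < d := by exact_mod_cast hd
  have hq0 : 0 < q := by linarith
  have hgap : 0 < 1/r - 1/q := by
    rw [sub_pos]; exact one_div_lt_one_div_of_lt hr hrq
  set ε := min (α/2) (d * (1/r - 1/q) / 2) with hε
  have hε0 : 0 < ε := lt_min (by positivity) (by positivity)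
  have hεα : ε < α := (min_le_left _ _).trans_lt (by linarith)
  have hε2 : ε / d < 1/r - 1/q := by
    rw [div_lt_iff₀ hd0]
    refine (min_le_right _ _).trans_lt ?_
    have : 0 < d * (1/r - 1/q) := by positivity
    linarith
  have hq1 : 0 < 1/q := by positivity
  set r1 := (1/r - ε/d)⁻¹ with hr1
  set r2 := (1/r + ε/d)⁻¹ with hr2
  have hr10 : 0 < r1 := inv_pos.mpr (by linarith)
  have hr20 : 0 < r2 := inv_pos.mpr (by positivity)
  have i1 : 1 / r1 = 1/r - ε/d := by rw [hr1, one_div, inv_inv]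
  have i2 : 1 / r2 = 1/r + ε/d := by rw [hr2, one_div, inv_inv]
  have hεd : 0 < ε / d := by positivity
  have hr1q : r1 < q := by
    rw [← one_div_lt_one_div hq0 hr10, i1]; linarith
  have hr21 : r2 ≤ r1 := by
    rw [← one_div_le_one_div hr10 hr20, i1, i2]; linarith
  set s := max r1 1 with hs
  obtain ⟨C1, hC1, h1⟩ := L6 d hd (α + ε) p q r1 s (by linarith) hp hr10 (le_max_left _ _) (le_max_right _ _)
    (max_lt hr1q hq) (by rw [h, i1]; ring)
  obtain ⟨C2, hC2, h2⟩ := L6 d hd (α - ε) p q r2 s (by linarith) hp hr20 (hr21.trans (le_max_left _ _)) (le_max_right _ _)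
    (max_lt hr1q hq) (by rw [h, i2]; ring)
  obtain ⟨K, hK, -, hk⟩ := geom ε ε hε0 hε0
  set c0 : ℝ≥0∞ := 2 ^ ((d:ℝ) - α) * K with hc0
  have hc0t : c0 ≠ ∞ := ENNReal.mul_ne_top (tw_ne_top _) hK
  refine ⟨(c0 ^ r * (C2 ^ (r / (2 * r2)) * C1 ^ (r / (2 * r1)))) ^ (1/r), ?_, ?_⟩
  · refine ENNReal.rpow_ne_top_of_nonneg (by positivity) (ENNReal.mul_ne_top ?_ (ENNReal.mul_ne_top ?_ ?_)) <;>
      exact ENNReal.rpow_ne_top_of_nonneg (by positivity) (by assumption)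
  intro θ hθ0 hθ f g hf hg hf1 hg1
  rw [LpNorm]
  refine ENNReal.rpow_le_rpow ?_ (by positivity)
  have hT := fun k => TT_meas d θ k f g hf hg
  set U : EE d → ℝ≥0∞ := fun x => ∑' k : ℤ, 2 ^ ((α + ε) * r1 * (k:ℝ)) * TT d θ k f g x ^ r1 with hU
  set W : EE d → ℝ≥0∞ := fun x => ∑' k : ℤ, 2 ^ ((α - ε) * r2 * (k:ℝ)) * TT d θ k f g x ^ r2 with hW
  have hUm : Measurable U := Measurable.tsum fun k => ((hT k).pow_const _).const_mul _
  have hWm : Measurable W := Measurable.tsum fun k => ((hT k).pow_const _).const_mul _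
  have hUi : ∫⁻ x, U x ≤ C1 := by
    rw [hU, lintegral_tsum fun k => (((hT k).pow_const _).const_mul _).aemeasurable]
    refine le_trans (le_of_eq ?_) (h1 θ hθ0 hθ f g hf hg hf1 hg1)
    congr 1; ext k
    rw [lintegral_const_mul _ ((hT k).pow_const _)]
  have hWi : ∫⁻ x, W x ≤ C2 := by
    rw [hW, lintegral_tsum fun k => (((hT k).pow_const _).const_mul _).aemeasurable]
    refine le_trans (le_of_eq ?_) (h2 θ hθ0 hθ f g hf hg hf1 hg1)
    congr 1; ext k
    rw [lintegral_const_mul _ ((hT k).pow_const _)]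
  have gen : ∀ (a ρ : ℝ) (k : ℤ) (t S : ℝ≥0∞), 0 < ρ → 2 ^ (a * ρ * (k:ℝ)) * t ^ ρ ≤ S →
      2 ^ (a * (k:ℝ)) * t ≤ S ^ (1/ρ) := by
    intro a ρ k t S hρ hS
    have := ENNReal.rpow_le_rpow hS (by positivity : 0 ≤ 1/ρ)
    rw [ENNReal.mul_rpow_of_nonneg _ _ (by positivity), ← ENNReal.rpow_mul, ← ENNReal.rpow_mul] at this
    rwa [show a * ρ * (k:ℝ) * (1/ρ) = a * k by field_simp, show ρ * (1/ρ) = 1 by field_simp, ENNReal.rpow_one] at this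
  have hpt : ∀ x, Iop d α θ f g x ^ r ≤ c0 ^ r * (W x ^ (r / (2 * r2)) * U x ^ (r / (2 * r1))) := by
    intro x
    have hsum : ∑' k : ℤ, 2 ^ (α * (k:ℝ)) * TT d θ k f g x ≤
        K * ((W x ^ (1/r2)) ^ (ε / (ε + ε)) * (U x ^ (1/r1)) ^ (ε / (ε + ε))) := by
      refine le_trans (ENNReal.tsum_le_tsum fun k => ?_) (hk _ _)
      have u1 := gen (α + ε) r1 k (TT d θ k f g x) (U x) hr10 (ENNReal.le_tsum (f := fun k : ℤ => 2 ^ ((α + ε) * r1 * (k:ℝ)) * TT d θ k f g x ^ r1) k)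
      have u2 := gen (α - ε) r2 k (TT d θ k f g x) (W x) hr20 (ENNReal.le_tsum (f := fun k : ℤ => 2 ^ ((α - ε) * r2 * (k:ℝ)) * TT d θ k f g x ^ r2) k)
      refine le_min ?_ ?_
      · calc _ = 2 ^ ((α - ε) * (k:ℝ)) * TT d θ k f g x * 2 ^ (ε * (k:ℝ)) := by
              rw [mul_right_comm, ← two_add]; congr 2; ring
          _ ≤ _ := by gcongr
      · calc _ = 2 ^ ((α + ε) * (k:ℝ)) * TT d θ k f g x * 2 ^ (-ε * (k:ℝ)) := by
              rw [mul_right_comm, ← two_add]; congr 2; ring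
          _ ≤ _ := by gcongr
    calc Iop d α θ f g x ^ r ≤ (c0 * ((W x ^ (1/r2)) ^ (ε / (ε + ε)) * (U x ^ (1/r1)) ^ (ε / (ε + ε)))) ^ r := by
          refine ENNReal.rpow_le_rpow ?_ hr.le
          refine (Iop_le d α θ hαd f g hf hg x).trans ?_
          rw [hc0, mul_assoc]; gcongr
      _ = _ := by
          have hε' : ε / (ε + ε) = 1/2 := by field_simp; norm_num
          rw [hε', ENNReal.mul_rpow_of_nonneg c0 _ hr.le, ENNReal.mul_rpow_of_nonneg ((W x ^ (1/r2)) ^ ((1:ℝ)/2)) _ hr.le]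
          simp only [← ENNReal.rpow_mul]
          congr 3 <;> field_simp
  have hconj : (2 * r2 / r).HolderConjugate (2 * r1 / r) := by
    have e : r / r2 + r / r1 = 2 := by
      rw [div_eq_mul_one_div r r2, div_eq_mul_one_div r r1, i1, i2]; field_simp; ring
    have hlt : r < 2 * r2 := by
      have : r / r2 < 2 := by
        have : 0 < r / r1 := by positivity
        linarith
      rw [div_lt_iff₀ hr20] at this; linarith
    rw [Real.holderConjugate_iff]
    refine ⟨by rw [lt_div_iff₀ hr]; linarith, ?_⟩
    rw [inv_div, inv_div]
    have e2 : r / (2 * r2) + r / (2 * r1) = (r / r2 + r / r1) / 2 := by field_simp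
    rw [e2, e]; norm_num
  have hH := ENNReal.lintegral_mul_le_Lp_mul_Lq volume hconj
    (f := fun x => W x ^ (r / (2 * r2))) (g := fun x => U x ^ (r / (2 * r1)))
    (hWm.pow_const _).aemeasurable (hUm.pow_const _).aemeasurable
  simp only [← ENNReal.rpow_mul, Pi.mul_apply] at hH
  rw [show r / (2 * r2) * (2 * r2 / r) = 1 by field_simp, show r / (2 * r1) * (2 * r1 / r) = 1 by field_simp,
    one_div_div, one_div_div] at hH
  simp only [ENNReal.rpow_one] at hH
  calc ∫⁻ x, Iop d α θ f g x ^ r ≤ ∫⁻ x, c0 ^ r * (W x ^ (r / (2 * r2)) * U x ^ (r / (2 * r1))) := lintegral_mono hpt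
    _ = c0 ^ r * ∫⁻ x, (W x ^ (r / (2 * r2)) * U x ^ (r / (2 * r1))) :=
        lintegral_const_mul _ ((hWm.pow_const _).mul (hUm.pow_const _))
    _ ≤ _ := by
        gcongr
        refine hH.trans ?_
        gcongr

lemma Iop_symm (d : ℕ) (α θ : ℝ) (f g : EE d → ℝ≥0∞) : Iop d α θ f g = Iop d α (1 - θ) g f := by
  ext x
  rw [Iop, Iop, ← lintegral_neg_eq_self]
  congr 1; ext y
  rw [norm_neg, mul_comm (f _)]
  congr 3 <;> congr 1
  · rw [smul_neg, ← neg_smul]; congr 1; ring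
  · rw [smul_neg, ← neg_smul]; congr 1; ring

lemma Iop_smul (d : ℕ) (α θ : ℝ) (f g : EE d → ℝ≥0∞) (hf : Measurable f) (hg : Measurable g) (a b : ℝ≥0∞) :
    Iop d α θ (fun x => a * f x) (fun x => b * g x) = fun x => a * b * Iop d α θ f g x := by
  ext x
  rw [Iop, Iop, ← lintegral_const_mul]
  · congr 1; ext y; ring
  · have h1 : Measurable (fun y : EE d => ENNReal.ofReal (‖y‖ ^ (α - (d:ℝ)))) := by fun_prop
    exact ((hf.comp (by fun_prop)).mul (hg.comp (by fun_prop))).mul h1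

lemma Iop_meas (d : ℕ) (α θ : ℝ) (f g : EE d → ℝ≥0∞) (hf : Measurable f) (hg : Measurable g) :
    Measurable (Iop d α θ f g) := by
  apply Measurable.lintegral_prod_right'
    (f := fun z : EE d × EE d => f (z.1 + (θ - 1) • z.2) * g (z.1 + θ • z.2) * ENNReal.ofReal (‖z.2‖ ^ (α - (d : ℝ))))
  have h1 : Measurable (fun y : EE d × EE d => ENNReal.ofReal (‖y.2‖ ^ (α - (d:ℝ)))) := by fun_prop
  exact ((hf.comp (by fun_prop)).mul (hg.comp (by fun_prop))).mul h1

lemma LpNorm_smul (d : ℕ) (r : ℝ) (hr : 0 < r) (h : EE d → ℝ≥0∞) (hm : Measurable h) (a : ℝ≥0∞) :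
    LpNorm d r (fun x => a * h x) = a * LpNorm d r h := by
  rw [LpNorm, LpNorm]
  simp_rw [ENNReal.mul_rpow_of_nonneg _ _ hr.le]
  rw [lintegral_const_mul _ (hm.pow_const _), ENNReal.mul_rpow_of_nonneg _ _ (by positivity), ← ENNReal.rpow_mul,
    show r * (1/r) = 1 by field_simp, ENNReal.rpow_one]

lemma norm1 (d : ℕ) (p : ℝ) (hp : 0 < p) (f : EE d → ℝ≥0∞) (hf : Measurable f) (t : ℝ≥0∞) (ht : t ≠ ∞)
    (h : LpNorm d p f < t) : ∫⁻ x, (t⁻¹ * f x) ^ p ≤ 1 := by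
  have h0 : t ≠ 0 := (zero_le.trans_lt h).ne'
  have h1 : LpNorm d p (fun x => t⁻¹ * f x) ≤ 1 := by
    rw [LpNorm_smul d p hp f hf]
    calc _ ≤ t⁻¹ * t := by gcongr
      _ = 1 := ENNReal.inv_mul_cancel h0 ht
  have h2 := ENNReal.rpow_le_rpow h1 hp.le
  rwa [LpNorm, ← ENNReal.rpow_mul, show 1/p * p = 1 by field_simp, ENNReal.rpow_one, ENNReal.one_rpow] at h2

lemma fin_step (d : ℕ) (α p q r θ : ℝ) (hp : 0 < p) (hq : 0 < q) (hr : 0 < r) (C : ℝ≥0∞) (hC : C ≠ ∞)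
    (H : ∀ f g : EE d → ℝ≥0∞, Measurable f → Measurable g →
      ∫⁻ x, f x ^ p ≤ 1 → ∫⁻ x, g x ^ q ≤ 1 → LpNorm d r (Iop d α θ f g) ≤ C)
    (f g : EE d → ℝ≥0∞) (hf : Measurable f) (hg : Measurable g) (hfp : LpNorm d p f < ∞)
    (hgq : LpNorm d q g < ∞) : LpNorm d r (Iop d α θ f g) ≤ C * LpNorm d p f * LpNorm d q g := by
  have key : ∀ t u : ℝ≥0∞, t ≠ ∞ → u ≠ ∞ → LpNorm d p f < t → LpNorm d q g < u →
      LpNorm d r (Iop d α θ f g) ≤ C * t * u := by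
    intro t u ht hu hft hgu
    have t0 : t ≠ 0 := (zero_le.trans_lt hft).ne'
    have u0 : u ≠ 0 := (zero_le.trans_lt hgu).ne'
    have := H _ _ (hf.const_mul t⁻¹) (hg.const_mul u⁻¹) (norm1 d p hp f hf t ht hft) (norm1 d q hq g hg u hu hgu)
    rw [Iop_smul d α θ f g hf hg, LpNorm_smul d r hr _ (Iop_meas d α θ f g hf hg)] at this
    calc _ = (t * t⁻¹) * (u * u⁻¹) * LpNorm d r (Iop d α θ f g) := by
          rw [ENNReal.mul_inv_cancel t0 ht, ENNReal.mul_inv_cancel u0 hu]; simp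
      _ = t * u * (t⁻¹ * u⁻¹ * LpNorm d r (Iop d α θ f g)) := by ring
      _ ≤ t * u * C := by gcongr
      _ = _ := by ring
  have hlim : Filter.Tendsto (fun n : ℕ => C * (LpNorm d p f + (n:ℝ≥0∞)⁻¹) * (LpNorm d q g + (n:ℝ≥0∞)⁻¹)) Filter.atTop
      (nhds (C * (LpNorm d p f + 0) * (LpNorm d q g + 0))) := by
    have h0 := ENNReal.tendsto_inv_nat_nhds_zero
    have a1 := (h0.const_add (LpNorm d p f))
    have a2 := (h0.const_add (LpNorm d q g))
    refine ENNReal.Tendsto.mul (ENNReal.Tendsto.const_mul a1 (Or.inr hC)) (Or.inr ?_) a2 (Or.inr ?_)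
    · simpa using hgq.ne
    · exact ENNReal.mul_ne_top hC (by simpa using hfp.ne)
  simp only [add_zero] at hlim
  refine ge_of_tendsto hlim ?_
  filter_upwards [Filter.eventually_gt_atTop 0] with n hn
  have hn' : ((n:ℝ≥0∞)⁻¹) ≠ ∞ := by simpa using hn.ne'
  have hn0 : ((n:ℝ≥0∞)⁻¹) ≠ 0 := by simp
  exact key _ _ (ENNReal.add_ne_top.2 ⟨hfp.ne, hn'⟩) (ENNReal.add_ne_top.2 ⟨hgq.ne, hn'⟩)
    (ENNReal.lt_add_right hfp.ne hn0) (ENNReal.lt_add_right hgq.ne hn0)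

theorem stmt0 (d : ℕ) (α p q r : ℝ) (hα0 : 0 < α) (hαd : α < d)
    (hp1 : 1 < p) (hpd : p < d / α) (hq1 : 1 < q) (hqd : q < d / α)
    (hpqr : 1 / p + 1 / q = 1 / r + α / d) :
    ∃ C : ℝ, 0 < C ∧
      ∀ θ : ℝ, θ ∈ Set.Icc (0 : ℝ) 1 →
        ∀ f g : EuclideanSpace ℝ (Fin d) → ℝ≥0∞,
          Measurable f → Measurable g →
          LpNorm d p f < ∞ → LpNorm d q g < ∞ →
          LpNorm d r (Iop d α θ f g) ≤
            ENNReal.ofReal C * LpNorm d p f * LpNorm d q g := by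
  have hd0 : (0:ℝ) < d := by linarith
  have hd : 0 < d := by exact_mod_cast hd0
  have hp0 : 0 < p := by linarith
  have hq0 : 0 < q := by linarith
  have e1 : α / d < 1 / p := by
    rw [div_lt_div_iff₀ hd0 hp0]
    rw [lt_div_iff₀ hα0] at hpd; linarith
  have e2 : α / d < 1 / q := by
    rw [div_lt_div_iff₀ hd0 hq0]
    rw [lt_div_iff₀ hα0] at hqd; linarith
  have hαd' : 0 < α / d := by positivity
  have hr : 0 < r := by
    have : 0 < 1 / r := by linarith
    exact one_div_pos.mp this
  have hrq : r < q := by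
    rw [← one_div_lt_one_div hq0 hr]; linarith
  have hrp : r < p := by
    rw [← one_div_lt_one_div hp0 hr]; linarith
  obtain ⟨C1, hC1, h1⟩ := L7 d hd α p q r hα0 hαd hp1 hq1 hr hrq hpqr
  obtain ⟨C2, hC2, h2⟩ := L7 d hd α q p r hα0 hαd hq1 hp1 hr hrp (by rw [add_comm]; exact hpqr)
  set C := max C1 C2 + 1 with hC
  have hCt : C ≠ ∞ := by simp [hC, hC1, hC2]
  refine ⟨C.toReal, ENNReal.toReal_pos (by simp [hC]) hCt, ?_⟩
  intro θ hθ f g hf hg hfp hgq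
  rw [ENNReal.ofReal_toReal hCt]
  refine fin_step d α p q r θ hp0 hq0 hr C hCt ?_ f g hf hg hfp hgq
  intro f g hf hg hf1 hg1
  rcases le_total θ (1/2) with hθ2 | hθ2
  · exact (h1 θ hθ.1 hθ2 f g hf hg hf1 hg1).trans ((le_max_left _ _).trans le_self_add)
  · rw [Iop_symm]
    exact (h2 (1 - θ) (by linarith [hθ.2]) (by linarith) g f hg hf hg1 hf1).trans ((le_max_right _ _).trans le_self_add)
end

section
/- Let d ∈ ℕ. For every θ ∈ [0,1] and all nonnegative functions f, g ∈ L^1(ℝ^d), one has ‖I^θ(f,g)‖_{L^{1/2}(ℝ^d)} ≤ 3^d 5^{2d} ‖f‖_{L^1(ℝ^d)} ‖g‖_{L^1(ℝ^d)}, i.e., (∫_{ℝ^d} I^θ(f,g)(x)^{1/2} dx)² ≤ 3^d 5^{2d} ‖f‖_{L^1} ‖g‖_{L^1}. -/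
open MeasureTheory ENNReal

/-- The bilinear operator `I^θ(f,g)(x) = ∫_{|y| ≤ 1} f(x + (θ−1)y) g(x + θy) dy`. -/
noncomputable def Ib (d : ℕ) (θ : ℝ)
    (f g : EuclideanSpace ℝ (Fin d) → ℝ≥0∞) (x : EuclideanSpace ℝ (Fin d)) : ℝ≥0∞ :=
  ∫⁻ y in {y : EuclideanSpace ℝ (Fin d) | ‖y‖ ≤ 1},
    f (x + (θ - 1) • y) * g (x + θ • y)

lemma cs_half {α : Type*} [MeasurableSpace α] (μ : Measure α) (a b : α → ℝ≥0∞)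
    (ha : Measurable a) (hb : Measurable b) :
    ∫⁻ x, a x ^ ((1 : ℝ) / 2) * b x ^ ((1 : ℝ) / 2) ∂μ ≤
      (∫⁻ x, a x ∂μ) ^ ((1 : ℝ) / 2) * (∫⁻ x, b x ∂μ) ^ ((1 : ℝ) / 2) := by
  have h := ENNReal.lintegral_mul_le_Lp_mul_Lq μ Real.HolderConjugate.two_two
    (ha.pow_const ((1 : ℝ) / 2)).aemeasurable (hb.pow_const ((1 : ℝ) / 2)).aemeasurable
  have e : ∀ t : ℝ≥0∞, (t ^ ((1 : ℝ) / 2)) ^ (2 : ℝ) = t := by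
    intro t
    rw [← ENNReal.rpow_mul]; norm_num
  simpa only [Pi.mul_apply, e] using h

/-- A cube of half-side `r`. -/
def cubeS (d : ℕ) (r : ℝ) : Set (EuclideanSpace ℝ (Fin d)) := {x | ∀ i, |x i| ≤ r}

lemma cubeS_eq (d : ℕ) (r : ℝ) : cubeS d r =
    (WithLp.ofLp : EuclideanSpace ℝ (Fin d) → (Fin d → ℝ)) ⁻¹'
      (Set.univ.pi fun _ => Set.Icc (-r) r) := by
  ext x
  simp only [cubeS, abs_le, Set.mem_ofPred_eq, Set.mem_preimage, Set.mem_univ_pi, Set.mem_Icc]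

lemma measurableSet_cubeS (d : ℕ) (r : ℝ) : MeasurableSet (cubeS d r) := by
  rw [cubeS_eq]
  exact (EuclideanSpace.volume_preserving_symm_measurableEquiv_toLp (Fin d)).measurable
    (MeasurableSet.univ_pi fun _ => measurableSet_Icc)

lemma volume_cubeS (d : ℕ) (r : ℝ) :
    volume (cubeS d r) = ENNReal.ofReal (2 * r) ^ d := by
  rw [cubeS_eq]
  have h := (EuclideanSpace.volume_preserving_symm_measurableEquiv_toLp
    (Fin d)).measure_preimage (s := Set.univ.pi fun _ => Set.Icc (-r) r)
    (MeasurableSet.univ_pi fun _ => measurableSet_Icc).nullMeasurableSet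
  refine Eq.trans h ?_
  rw [volume_pi_pi]; simp only [Real.volume_Icc, Finset.prod_const, Finset.card_univ, Fintype.card_fin]
  congr 2; ring

/-- Indicator of the cube. -/
noncomputable def cubeI (d : ℕ) (r : ℝ) : EuclideanSpace ℝ (Fin d) → ℝ≥0∞ :=
  (cubeS d r).indicator 1

lemma cubeI_meas (d : ℕ) (r : ℝ) : Measurable (cubeI d r) :=
  measurable_one.indicator (measurableSet_cubeS d r)

lemma cubeI_int (d : ℕ) (r : ℝ) : ∫⁻ x, cubeI d r x = ENNReal.ofReal (2 * r) ^ d := by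
  rw [← volume_cubeS, cubeI, lintegral_indicator_one (measurableSet_cubeS d r)]

lemma conv_int (d : ℕ) (r : ℝ) (h : EuclideanSpace ℝ (Fin d) → ℝ≥0∞) (hh : Measurable h) :
    ∫⁻ z, ∫⁻ x, cubeI d r (x - z) * h x = ENNReal.ofReal (2 * r) ^ d * ∫⁻ x, h x := by
  have hm := cubeI_meas d r
  rw [lintegral_lintegral_swap (by fun_prop)]
  rw [← lintegral_const_mul _ hh]
  refine lintegral_congr fun x => ?_
  rw [lintegral_mul_const _ (by fun_prop), lintegral_sub_left_eq_self (cubeI d r) x, cubeI_int]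

lemma bil_int (d : ℕ) (θ : ℝ) (f g : EuclideanSpace ℝ (Fin d) → ℝ≥0∞)
    (hf : Measurable f) (hg : Measurable g) :
    ∫⁻ x, ∫⁻ y, f (x + (θ - 1) • y) * g (x + θ • y) = (∫⁻ x, f x) * ∫⁻ x, g x := by
  rw [lintegral_lintegral_swap (by fun_prop)]
  have h1 : ∀ y, ∫⁻ x, f (x + (θ - 1) • y) * g (x + θ • y) = ∫⁻ x, f (x - y) * g x := by
    intro y
    rw [← lintegral_add_right_eq_self (fun x => f (x - y) * g x) (θ • y)]
    refine lintegral_congr fun x => ?_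
    congr 2
    module
  simp_rw [h1]
  rw [lintegral_lintegral_swap (by fun_prop), ← lintegral_const_mul _ hg]
  refine lintegral_congr fun x => ?_
  rw [lintegral_mul_const _ (by fun_prop), lintegral_sub_left_eq_self f x]

lemma cube_step (d : ℕ) (t : ℝ) (ht : |t| ≤ 1) (x y z : EuclideanSpace ℝ (Fin d))
    (hx : x - z ∈ cubeS d 1) (hy : ‖y‖ ≤ 1) : x + t • y - z ∈ cubeS d 2 := by
  intro i
  have h1 := hx i
  have h2 : |y i| ≤ 1 := (PiLp.norm_apply_le y i).trans hy
  have h3 : |t * y i| ≤ 1 := by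
    rw [abs_mul]; exact mul_le_one₀ ht (abs_nonneg _) h2
  have e : (x + t • y - z) i = (x - z) i + t * y i := by
    simp; ring
  rw [e]
  exact (abs_add_le _ _).trans (by linarith)

lemma local_bound (d : ℕ) (θ : ℝ) (hθ : θ ∈ Set.Icc (0 : ℝ) 1)
    (f g : EuclideanSpace ℝ (Fin d) → ℝ≥0∞)
    (hf : Measurable f) (hg : Measurable g) (z : EuclideanSpace ℝ (Fin d)) :
    ∫⁻ x, cubeI d 1 (x - z) * Ib d θ f g x ≤
      (∫⁻ x, cubeI d 2 (x - z) * f x) * ∫⁻ x, cubeI d 2 (x - z) * g x := by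
  have hm := cubeI_meas d 2
  rw [← bil_int d θ (fun x => cubeI d 2 (x - z) * f x) (fun x => cubeI d 2 (x - z) * g x)
    (by fun_prop) (by fun_prop)]
  refine lintegral_mono fun x => ?_
  by_cases hx : x - z ∈ cubeS d 1
  · have : cubeI d 1 (x - z) = 1 := by simp [cubeI, hx]
    simp only [this, one_mul, Ib]
    refine le_trans ?_ (setLIntegral_le_lintegral {y : EuclideanSpace ℝ (Fin d) | ‖y‖ ≤ 1} _)
    refine setLIntegral_mono' (measurableSet_le measurable_norm measurable_const) fun y hy => ?_
    have h1 := cube_step d (θ - 1) (by rw [abs_le]; constructor <;> linarith [hθ.1, hθ.2])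
      x y z hx hy
    have h2 := cube_step d θ (by rw [abs_le]; constructor <;> linarith [hθ.1, hθ.2])
      x y z hx hy
    simp [cubeI, h1, h2]
  · simp [cubeI, hx]

theorem stmt3 (d : ℕ) (θ : ℝ) (hθ : θ ∈ Set.Icc (0 : ℝ) 1)
    (f g : EuclideanSpace ℝ (Fin d) → ℝ≥0∞)
    (hf : Measurable f) (hg : Measurable g)
    (hf1 : (∫⁻ x, f x) < ∞) (hg1 : (∫⁻ x, g x) < ∞) :
    (∫⁻ x, (Ib d θ f g x) ^ ((1 : ℝ) / 2)) ^ (2 : ℕ) ≤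
      (3 ^ d * 5 ^ (2 * d) : ℝ≥0∞) * (∫⁻ x, f x) * (∫⁻ x, g x) := by
  have hI : Measurable (Ib d θ f g) := by
    unfold Ib
    exact Measurable.lintegral_prod_right' (f := fun p : EuclideanSpace ℝ (Fin d) ×
      EuclideanSpace ℝ (Fin d) => f (p.1 + (θ - 1) • p.2) * g (p.1 + θ • p.2)) (by fun_prop)
  have hm1 := cubeI_meas d 1
  have hm2 := cubeI_meas d 2
  have v1 : ENNReal.ofReal (2 * 1) = 2 := by norm_num
  have v2 : ENNReal.ofReal (2 * 2) = 4 := by norm_num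
  have mF : ∀ h : EuclideanSpace ℝ (Fin d) → ℝ≥0∞, Measurable h →
      Measurable fun z => ∫⁻ x, cubeI d 2 (x - z) * h x := by
    intro h hh
    exact Measurable.lintegral_prod_right' (f := fun p : EuclideanSpace ℝ (Fin d) ×
      EuclideanSpace ℝ (Fin d) => cubeI d 2 (p.2 - p.1) * h p.2) (by fun_prop)
  have key : (2 : ℝ≥0∞) ^ d * ∫⁻ x, (Ib d θ f g x) ^ ((1 : ℝ) / 2) ≤
      ((2 : ℝ≥0∞) ^ d) ^ ((1 : ℝ) / 2) * ((4 ^ d * ∫⁻ x, f x) ^ ((1 : ℝ) / 2) *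
        (4 ^ d * ∫⁻ x, g x) ^ ((1 : ℝ) / 2)) := by
    have c1 := conv_int d 1 _ (hI.pow_const ((1 : ℝ) / 2))
    have c2 := conv_int d 2 f hf
    have c3 := conv_int d 2 g hg
    rw [v1] at c1
    rw [v2] at c2 c3
    rw [← c1, ← c2, ← c3]
    refine le_trans ?_ (mul_le_mul_right (cs_half volume _ _ (mF f hf) (mF g hg)) _)
    rw [← lintegral_const_mul _ (by exact ((mF f hf).pow_const _).mul ((mF g hg).pow_const _))]
    refine lintegral_mono fun z => ?_
    have c := cs_half volume (fun x => cubeI d 1 (x - z))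
      (fun x => cubeI d 1 (x - z) * Ib d θ f g x) (by fun_prop) (by fun_prop)
    have e : ∀ x, cubeI d 1 (x - z) ^ ((1 : ℝ) / 2) *
        (cubeI d 1 (x - z) * Ib d θ f g x) ^ ((1 : ℝ) / 2) =
        cubeI d 1 (x - z) * Ib d θ f g x ^ ((1 : ℝ) / 2) := by
      intro x
      by_cases hx : x - z ∈ cubeS d 1 <;> simp [cubeI, hx]
    simp only [e] at c
    rw [lintegral_sub_right_eq_self (cubeI d 1) z, cubeI_int, v1] at c
    refine c.trans (mul_le_mul_right ?_ _)
    rw [← ENNReal.mul_rpow_of_nonneg _ _ (by norm_num)]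
    exact ENNReal.rpow_le_rpow (local_bound d θ hθ f g hf hg z) (by norm_num)
  have e : ∀ t : ℝ≥0∞, (t ^ ((1 : ℝ) / 2)) ^ (2 : ℕ) = t := by
    intro t
    rw [← ENNReal.rpow_natCast, ← ENNReal.rpow_mul]; norm_num
  have k2 := pow_le_pow_left' key 2
  simp only [mul_pow, e] at k2
  set L := (∫⁻ x, (Ib d θ f g x) ^ ((1 : ℝ) / 2)) ^ (2 : ℕ)
  set A := ∫⁻ x, f x
  set B := ∫⁻ x, g x
  have h2 : (4 : ℝ≥0∞) ^ d = 2 ^ d * 2 ^ d := by rw [← mul_pow]; norm_num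
  have h0 : ((2 : ℝ≥0∞) ^ d) ^ 2 ≠ 0 := by positivity
  have ht : ((2 : ℝ≥0∞) ^ d) ^ 2 ≠ ∞ := by finiteness
  have k3 : L ≤ 8 ^ d * A * B := by
    rw [← ENNReal.mul_le_mul_iff_right h0 ht]
    refine k2.trans (le_of_eq ?_)
    have h8 : (8 : ℝ≥0∞) ^ d = 2 ^ d * 2 ^ d * 2 ^ d := by
      rw [← mul_pow, ← mul_pow]; norm_num
    rw [h2, h8]; ring
  refine k3.trans ?_
  gcongr
  rw [pow_mul, ← mul_pow]
  gcongr
  norm_num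
end
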